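/- arXiv:1501.02618 — 8 statements merged into one kernel-verified Lean document; each statement's English description precedes it below -/
import Mathlib

section
/- There exist absolute constants 0 < c ≤ C such that for all 1 < x ≤ y and t > 0 with xy < t and y² ≥ 16·t, one has c·(ln x / ln(3t/y))·p(t,x,y) ≤ p₁(t,x,y) ≤ C·(ln x / ln(3t/y))·p(t,x,y). -/
open Real MeasureTheory

/-- Modified Bessel function of the first kind, order 0. -/
noncomputable def I0 (z : ℝ) : ℝ := ∑' n : ℕ, (z/2)^(2*n) / ((n.factorial : ℝ))^2

/-- Modified Bessel function of the first kind, order 1. -/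
noncomputable def I1 (z : ℝ) : ℝ :=
  ∑' n : ℕ, (z/2)^(2*n+1) / ((n.factorial : ℝ) * ((n+1).factorial : ℝ))

/-- Heat kernel of the Bessel operator `d²/dx² + (1/x) d/dx` on `(0,∞)`
with respect to the measure `y dy`. -/
noncomputable def pk (t x y : ℝ) : ℝ :=
  t⁻¹ * Real.exp (-(x^2 + y^2)/(2*t)) * I0 (x*y/t)

/-- The function `h` from (AC): Dirichlet heat kernel of `(1/2) d²/dx²` on `(1,∞)`
multiplied by `(xy)⁻¹`. -/
noncomputable def hker (t x y : ℝ) : ℝ :=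
  (2*Real.pi*t)^(-(1:ℝ)/2) * (x*y)⁻¹ *
    (Real.exp (-(x-y)^2/(2*t)) - Real.exp (-(x+y-2)^2/(2*t)))

/-- Bundled hypotheses on the Dirichlet heat kernel `p₁` of the Bessel operator on
`(1,∞)` and on the density `q` of the first hitting time of `1` by the
2-dimensional Bessel process. -/
structure BesselHK (p₁ : ℝ → ℝ → ℝ → ℝ) (q : ℝ → ℝ → ℝ) : Prop where
  meas_p₁ : Measurable fun z : ℝ × ℝ × ℝ => p₁ z.1 z.2.1 z.2.2
  meas_q : Measurable fun z : ℝ × ℝ => q z.1 z.2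
  p₁_nonneg : ∀ ⦃t x y : ℝ⦄, 0 < t → 1 < x → 1 < y → 0 ≤ p₁ t x y
  q_nonneg : ∀ ⦃x s : ℝ⦄, 1 < x → 0 < s → 0 ≤ q x s
  hunt : ∀ ⦃t x y : ℝ⦄, 0 < t → 1 < x → 1 < y →
    p₁ t x y = pk t x y - ∫ u in Set.Ioo 0 t, q x u * pk (t-u) 1 y
  symm : ∀ ⦃t x y : ℝ⦄, 0 < t → 1 < x → 1 < y → p₁ t x y = p₁ t y x
  ck : ∀ ⦃t s x y : ℝ⦄, 0 < t → 0 < s → 1 < x → 1 < y →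
    p₁ (t+s) x y = ∫ w in Set.Ioi (1:ℝ), p₁ t x w * p₁ s w y * w
  mass : ∀ ⦃t x : ℝ⦄, 0 < t → 1 < x →
    (∫ y in Set.Ioi (1:ℝ), p₁ t x y * y) = ∫ u in Set.Ioi t, q x u
  q1 : ∃ c C : ℝ, 0 < c ∧ c ≤ C ∧ ∀ ⦃x s : ℝ⦄, 1 < x → 0 < s →
    ((s < 2*x →
      c * (((x-1)/Real.sqrt x) * s^(-(3:ℝ)/2) * Real.exp (-(x-1)^2/(2*s))) ≤ q x s ∧
      q x s ≤ C * (((x-1)/Real.sqrt x) * s^(-(3:ℝ)/2) * Real.exp (-(x-1)^2/(2*s)))) ∧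
     (2*x ≤ s →
      c * (((x-1)/x) * ((1+Real.log x)/((1+Real.log (s+x))*(1+Real.log (1+s/x)))) *
        s⁻¹ * Real.exp (-(x-1)^2/(2*s))) ≤ q x s ∧
      q x s ≤ C * (((x-1)/x) * ((1+Real.log x)/((1+Real.log (s+x))*(1+Real.log (1+s/x)))) *
        s⁻¹ * Real.exp (-(x-1)^2/(2*s)))))
  q2 : ∀ ⦃x s : ℝ⦄, 1 < x → 0 < s →
    ((x-1)/Real.sqrt (2*Real.pi*x)) * s^(-(3:ℝ)/2) * Real.exp (-(x-1)^2/(2*s)) ≤ q x s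
  surv : ∃ c' C' : ℝ, 0 < c' ∧ c' ≤ C' ∧ ∀ ⦃t x : ℝ⦄, 0 < t → 1 < x →
    c' * min 1 (Real.log x / Real.log (1+Real.sqrt t)) ≤ (∫ u in Set.Ioi t, q x u) ∧
    (∫ u in Set.Ioi t, q x u) ≤ C' * min 1 (Real.log x / Real.log (1+Real.sqrt t))
  ac : ∀ ⦃t x y : ℝ⦄, 0 < t → 1 < x → 1 < y →
    Real.sqrt (x*y) * hker t x y ≤ p₁ t x y ∧
    p₁ t x y ≤ Real.exp (t/8) * Real.sqrt (x*y) * hker t x y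

lemma I0_summable (z : ℝ) (hz : 0 ≤ z) :
    Summable fun n : ℕ => (z/2)^(2*n) / ((n.factorial : ℝ))^2 := by
  refine Summable.of_nonneg_of_le (fun n => by positivity) (fun n => ?_)
    ((Real.summable_pow_div_factorial (z/2)).mul_left (Real.exp (z/2)))
  have h1 := Real.pow_div_factorial_le_exp (z/2) (by positivity) n
  have h2 : (0:ℝ) ≤ (z/2)^n / n.factorial := by positivity
  calc (z/2)^(2*n) / ((n.factorial : ℝ))^2 = ((z/2)^n / n.factorial) * ((z/2)^n / n.factorial) := by
        rw [div_mul_div_comm, ← pow_add, two_mul, sq]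
    _ ≤ _ := mul_le_mul_of_nonneg_right h1 h2

lemma I0_le_exp (z : ℝ) (hz : 0 ≤ z) : I0 z ≤ Real.exp z := by
  have h : I0 z ≤ ∑' n : ℕ, Real.exp (z/2) * ((z/2)^n / n.factorial) := by
    refine Summable.tsum_le_tsum (fun n => ?_) (I0_summable z hz)
      ((Real.summable_pow_div_factorial (z/2)).mul_left (Real.exp (z/2)))
    have h1 := Real.pow_div_factorial_le_exp (z/2) (by positivity) n
    have h2 : (0:ℝ) ≤ (z/2)^n / n.factorial := by positivity
    calc (z/2)^(2*n) / ((n.factorial : ℝ))^2 = ((z/2)^n / n.factorial) * ((z/2)^n / n.factorial) := by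
          rw [div_mul_div_comm, ← pow_add, two_mul, sq]
      _ ≤ _ := mul_le_mul_of_nonneg_right h1 h2
  rw [tsum_mul_left] at h
  have h3 : ∑' n : ℕ, (z/2)^n / (n.factorial : ℝ) = Real.exp (z/2) := by
    rw [Real.exp_eq_exp_ℝ, NormedSpace.exp_eq_tsum_div]
  rw [h3, ← Real.exp_add] at h
  simpa using h

lemma pow_sub_le (A B : ℝ) (hA : 0 ≤ A) (hAB : A ≤ B) (hB : B ≤ 1) (n : ℕ) :
    B^n - A^n ≤ n * (B - A) := by
  induction n with
  | zero => simp
  | succ k ih =>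
    have h1 : A^k ≤ 1 := pow_le_one₀ hA (hAB.trans hB)
    have h2 : A^k ≤ B^k := pow_le_pow_left₀ hA hAB k
    have h3 : 0 ≤ A ^ k := by positivity
    push_cast
    rw [pow_succ, pow_succ]
    nlinarith

lemma I0_sub_le (a b : ℝ) (ha : 0 ≤ a) (hab : a ≤ b) (hb : b ≤ 2) :
    I0 b - I0 a ≤ b^2 - a^2 := by
  have hd : 0 ≤ (b/2)^2 - (a/2)^2 := by nlinarith
  have hs1 := I0_summable a ha
  have hs2 := I0_summable b (ha.trans hab)
  have hs3 : Summable fun n : ℕ => ((b/2)^2 - (a/2)^2) * ((1:ℝ)^n / n.factorial) :=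
    (Real.summable_pow_div_factorial 1).mul_left _
  have h : I0 b - I0 a ≤ ∑' n : ℕ, ((b/2)^2 - (a/2)^2) * ((1:ℝ)^n / n.factorial) := by
    unfold I0
    rw [← hs2.tsum_sub hs1]
    refine Summable.tsum_le_tsum (fun n => ?_) (hs2.sub hs1) hs3
    have h1 := pow_sub_le ((a/2)^2) ((b/2)^2) (by positivity) (by nlinarith) (by nlinarith) n
    have h2 : (n:ℝ) ≤ n.factorial := by exact_mod_cast Nat.self_le_factorial n
    have h3 : (0:ℝ) < n.factorial := by positivity
    rw [← sub_div, pow_mul, pow_mul, one_pow, div_le_iff₀ (by positivity)]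
    have : ((b/2)^2 - (a/2)^2) * (1 / (n.factorial:ℝ)) * (n.factorial:ℝ)^2
        = ((b/2)^2 - (a/2)^2) * n.factorial := by field_simp
    rw [this]
    nlinarith
  rw [tsum_mul_left] at h
  have h3 : ∑' n : ℕ, (1:ℝ)^n / (n.factorial : ℝ) = Real.exp 1 := by
    rw [Real.exp_eq_exp_ℝ, NormedSpace.exp_eq_tsum_div]
  rw [h3] at h
  have := Real.exp_one_lt_d9
  nlinarith

lemma I0_sub_ge (a b : ℝ) (ha : 0 ≤ a) (hab : a ≤ b) :
    (b^2 - a^2)/4 ≤ I0 b - I0 a := by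
  have hs1 := I0_summable a ha
  have hs2 := I0_summable b (ha.trans hab)
  unfold I0
  rw [← hs2.tsum_sub hs1]
  refine le_trans ?_ ((hs2.sub hs1).le_tsum 1 (fun n _ => ?_))
  · norm_num; linarith
  · rw [← sub_div]
    have : (a/2)^(2*n) ≤ (b/2)^(2*n) := pow_le_pow_left₀ (by positivity) (by linarith) _
    exact div_nonneg (by linarith) (by positivity)

lemma I0_one_le (z : ℝ) (hz : 0 ≤ z) : 1 ≤ I0 z := by
  have := (I0_summable z hz).le_tsum 0 (fun n _ => by positivity)
  simpa [I0] using this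

lemma I0_mono (a b : ℝ) (ha : 0 ≤ a) (hab : a ≤ b) : I0 a ≤ I0 b := by
  have := I0_sub_ge a b ha hab
  nlinarith

lemma I0_growth (a b : ℝ) (ha : 0 ≤ a) (ha1 : a ≤ 1) (hab : a ≤ b) :
    I0 b ≤ Real.exp (4*(b-a)) * I0 a := by
  have h1 := I0_one_le a ha
  by_cases hb : b ≤ 2
  · have h2 := I0_sub_le a b ha hab hb
    have h3 := Real.add_one_le_exp (4*(b-a))
    have h4 : b^2 - a^2 ≤ 4*(b-a) := by nlinarith
    nlinarith
  · push Not at hb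
    have h2 := I0_le_exp b (by linarith)
    have h3 : Real.exp b ≤ Real.exp (4*(b-a)) := Real.exp_le_exp.2 (by linarith)
    have := Real.exp_pos (4*(b-a))
    nlinarith

lemma I0_meas : Measurable fun z : ℝ => I0 |z| := by
  refine measurable_of_tendsto_metrizable (f := fun N : ℕ => fun z : ℝ =>
    ∑ n ∈ Finset.range N, (|z|/2)^(2*n) / ((n.factorial : ℝ))^2) (fun N => by fun_prop) ?_
  rw [tendsto_pi_nhds]
  intro z
  exact (I0_summable |z| (abs_nonneg z)).hasSum.tendsto_sum_nat

lemma pk_pos (t x y : ℝ) (ht : 0 < t) (hx : 0 < x) (hy : 0 < y) : 0 < pk t x y := by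
  have := I0_one_le (x*y/t) (by positivity)
  unfold pk; positivity

lemma I0_meas' : Measurable fun z : ℝ => I0 z := by
  have : (fun z : ℝ => I0 z) = fun z => I0 |z| := by
    funext z
    unfold I0
    congr 1
    funext n
    have : (|z|/2)^(2*n) = (z/2)^(2*n) := by
      rw [pow_mul, pow_mul, div_pow, sq_abs, div_pow z]
    rw [this]
  rw [this]; exact I0_meas

lemma pk_meas (t y : ℝ) : Measurable fun u : ℝ => pk (t-u) 1 y := by
  unfold pk
  have hs : Measurable fun u : ℝ => t - u := measurable_const.sub measurable_id
  have h1 : Measurable fun u : ℝ => Real.exp (-(1^2 + y^2)/(2*(t-u))) :=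
    Real.measurable_exp.comp (measurable_const.div (hs.const_mul 2))
  have h2 : Measurable fun u : ℝ => I0 (1*y/(t-u)) :=
    I0_meas'.comp (measurable_const.div hs)
  exact (hs.inv.mul h1).mul h2

/-- decay of the kernel backwards in time -/
lemma pk_upper (t y u : ℝ) (ht : 0 < t) (hy : 16 < y) (hyt : y < t) (h16 : 16*t ≤ y^2)
    (hu : 0 < u) (hut : u < t) :
    pk (t-u) 1 y ≤ pk t 1 y * Real.exp (-(3/16*(u*y^2/t^2))) := by
  obtain ⟨s, rfl⟩ : ∃ s, t = s + u := ⟨t-u, by ring⟩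
  have hs : 0 < s := by linarith
  simp only [add_sub_cancel_right]
  set D : ℝ := 1/s - 1/(s+u) with hD
  have hD' : D = u/(s*(s+u)) := by rw [hD]; field_simp; ring
  have hD0 : 0 < D := by rw [hD']; positivity
  have hDge : u/(s+u)^2 ≤ D := by
    rw [hD']
    apply div_le_div_of_nonneg_left hu.le (by positivity)
    nlinarith
  have hI := I0_growth (1*y/(s+u)) (1*y/s) (by positivity) (by
      rw [div_le_one ht]; linarith) (by
      apply div_le_div_of_nonneg_left (by linarith) hs (by linarith))
  have e1 : 1*y/s - 1*y/(s+u) = y*D := by rw [hD]; ring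
  rw [e1] at hI
  have e2 : s⁻¹ ≤ (s+u)⁻¹ * Real.exp ((s+u)*D) := by
    have h1 := Real.add_one_le_exp ((s+u)*D)
    have h2 : (s+u)*D + 1 = (s+u) * s⁻¹ := by rw [hD]; field_simp; ring
    rw [h2] at h1
    calc s⁻¹ = (s+u)⁻¹ * ((s+u) * s⁻¹) := by field_simp
      _ ≤ _ := by gcongr
  have e3 : -((1:ℝ)^2+y^2)/(2*s) = -(1^2+y^2)/(2*(s+u)) + (-(1+y^2)/2*D) := by
    rw [hD]; field_simp; ring
  unfold pk
  have hI0 := I0_one_le (1*y/(s+u)) (by positivity)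
  calc s⁻¹ * Real.exp (-((1:ℝ)^2+y^2)/(2*s)) * I0 (1*y/s)
      ≤ ((s+u)⁻¹ * Real.exp ((s+u)*D)) * (Real.exp (-((1:ℝ)^2+y^2)/(2*(s+u))) * Real.exp (-(1+y^2)/2*D))
        * (Real.exp (4*(y*D)) * I0 (1*y/(s+u))) := by
        rw [e3, Real.exp_add]; gcongr
        exact le_trans zero_le_one (I0_one_le _ (by positivity))
    _ = ((s+u)⁻¹ * Real.exp (-((1:ℝ)^2+y^2)/(2*(s+u))) * I0 (1*y/(s+u))) *
        Real.exp ((s+u)*D + (-(1+y^2)/2*D) + 4*(y*D)) := by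
        rw [Real.exp_add, Real.exp_add]; ring
    _ ≤ _ := by
        gcongr
        have h5 : 3/16*(u*y^2/(s+u)^2) ≤ 3/16*y^2*D := by
          have : u*y^2/(s+u)^2 = y^2*(u/(s+u)^2) := by ring
          rw [this]; nlinarith [mul_le_mul_of_nonneg_left hDge (sq_nonneg y)]
        have h6 : (s+u) + (-(1+y^2)/2) + 4*y ≤ -(3/16*y^2) := by nlinarith
        nlinarith [mul_le_mul_of_nonneg_right h6 hD0.le]

lemma pk_lower (t y u : ℝ) (ht : 0 < t) (hy : 1 < y) 
    (hu : 0 < u) (hut : u ≤ t/2) :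
    pk t 1 y * Real.exp (-(2*(u*y^2/t^2))) ≤ pk (t-u) 1 y := by
  have hs : 0 < t - u := by linarith
  have e3 : -((1:ℝ)^2+y^2)/(2*t) + (-(2*(u*y^2/t^2))) ≤ -(1^2+y^2)/(2*(t-u)) := by
    have h1 : (1^2+y^2)/(2*(t-u)) - (1^2+y^2)/(2*t) = (1+y^2)*u/(2*t*(t-u)) := by
      field_simp; ring
    have h2 : (1+y^2)*u/(2*t*(t-u)) ≤ (2*y^2)*u/(t*t) := by
      apply div_le_div₀ (by positivity) _ (by positivity) (by nlinarith)
      gcongr; nlinarith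
    have h3 : (2*y^2)*u/(t*t) = 2*(u*y^2/t^2) := by field_simp
    rw [neg_div, neg_div]; linarith
  have hI := I0_mono (1*y/t) (1*y/(t-u)) (by positivity) (by
      apply div_le_div_of_nonneg_left (by linarith) hs (by linarith))
  have hI0 := I0_one_le (1*y/t) (by positivity)
  unfold pk
  calc _ = t⁻¹ * Real.exp (-((1:ℝ)^2+y^2)/(2*t) + (-(2*(u*y^2/t^2)))) * I0 (1*y/t) := by
        rw [Real.exp_add]; ring
    _ ≤ _ := by
        gcongr
        linarith

lemma pk_compare (t x y : ℝ) (ht : 0 < t) (hx : 1 < x) (hy : 1 < y) (hxy : x*y < t)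
    (h16 : 16*t ≤ y^2) :
    pk t 1 y ≤ pk t x y ∧ pk t x y ≤ pk t 1 y * (1 + (x^2-1)*y^2/t^2) := by
  have hz : x*y/t ≤ 1 := by rw [div_le_one ht]; linarith
  have hm : 1*y/t ≤ x*y/t := by gcongr
  have h0 : 0 ≤ 1*y/t := by positivity
  have hL := I0_sub_ge _ _ h0 hm
  have hU := I0_sub_le _ _ h0 hm (by linarith)
  have e : (x*y/t)^2 - (1*y/t)^2 = (x^2-1)*y^2/t^2 := by ring
  rw [e] at hL hU
  have h1 := I0_one_le _ h0
  have hx2 : 0 < x^2 - 1 := by nlinarith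
  set d := (x^2-1)*y^2/t^2 with hd
  have hd0 : 0 < d := by positivity
  have hI2 : I0 (x*y/t) ≤ 4 := by
    refine (I0_le_exp _ (by positivity)).trans ?_
    have := Real.exp_one_lt_d9
    have := Real.exp_le_exp.2 hz
    linarith
  have hexp : Real.exp (-(x^2+y^2)/(2*t)) = Real.exp (-(1^2+y^2)/(2*t)) * Real.exp (-((x^2-1)/(2*t))) := by
    rw [← Real.exp_add]; congr 1; field_simp; ring
  have ha : (x^2-1)/(2*t) ≤ d/32 := by
    rw [hd, div_le_iff₀ (by positivity)]
    have : (x^2-1)*y^2/t^2/32*(2*t) = (x^2-1)*(y^2/(16*t)) := by field_simp; ring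
    rw [this]
    have : 1 ≤ y^2/(16*t) := by rw [le_div_iff₀ (by positivity)]; linarith
    nlinarith
  have ha0 : 0 ≤ (x^2-1)/(2*t) := by positivity
  have hE := Real.add_one_le_exp (-((x^2-1)/(2*t)))
  have hE1 : Real.exp (-((x^2-1)/(2*t))) ≤ 1 := Real.exp_le_one_iff.2 (by linarith)
  have hE0 := Real.exp_pos (-((x^2-1)/(2*t)))
  set E := Real.exp (-((x^2-1)/(2*t)))
  have hP : 0 < t⁻¹ * Real.exp (-(1^2+y^2)/(2*t)) := by positivity
  unfold pk
  rw [hexp]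
  constructor
  · have : I0 (1*y/t) ≤ E * I0 (x*y/t) := by nlinarith
    calc _ ≤ t⁻¹ * Real.exp (-(1^2+y^2)/(2*t)) * (E * I0 (x*y/t)) := by gcongr
      _ = _ := by ring
  · have : E * I0 (x*y/t) ≤ I0 (1*y/t) * (1+d) := by nlinarith
    calc _ = t⁻¹ * Real.exp (-(1^2+y^2)/(2*t)) * (E * I0 (x*y/t)) := by ring
      _ ≤ t⁻¹ * Real.exp (-(1^2+y^2)/(2*t)) * (I0 (1*y/t) * (1+d)) := by gcongr
      _ = _ := by ring

open ProbabilityTheory in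
lemma gauss_quad (m t : ℝ) (ht : 0 < t) (α β γ : ℝ) :
    Integrable (fun y : ℝ => (Real.sqrt (2*π*t))⁻¹ * Real.exp (-(y-m)^2/(2*t)) *
      (α + β*(y-m) + γ*(y-m)^2)) ∧
    ∫ y : ℝ, (Real.sqrt (2*π*t))⁻¹ * Real.exp (-(y-m)^2/(2*t)) *
      (α + β*(y-m) + γ*(y-m)^2) = α + γ*t := by
  set v : NNReal := ⟨t, ht.le⟩ with hv
  have hv0 : v ≠ 0 := by
    intro h; have := congrArg NNReal.toReal h; change t = 0 at this; linarith
  have hvt : (v:ℝ) = t := rfl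
  have hid : MemLp (fun y : ℝ => y) 2 (gaussianReal m v) := memLp_id_gaussianReal 2
  have hc : MemLp (fun y : ℝ => y - m) 2 (gaussianReal m v) := hid.sub (memLp_const m)
  have i1 : Integrable (fun y : ℝ => y - m) (gaussianReal m v) := hc.integrable (by norm_num)
  have i2 : Integrable (fun y : ℝ => (y - m)^2) (gaussianReal m v) := hc.integrable_sq
  have v1 : ∫ y, (y - m) ∂(gaussianReal m v) = 0 := by
    rw [integral_sub (hid.integrable (by norm_num)) (integrable_const m)]
    simp
  have v2 : ∫ y, (y - m)^2 ∂(gaussianReal m v) = t := by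
    have h := variance_fun_id_gaussianReal (μ := m) (v := v)
    rw [variance_eq_integral (by fun_prop)] at h
    simpa [hvt] using h
  have iall : Integrable (fun y : ℝ => α + β*(y-m) + γ*(y-m)^2) (gaussianReal m v) :=
    ((integrable_const α).add (i1.const_mul β)).add (i2.const_mul γ)
  have vall : ∫ y, (α + β*(y-m) + γ*(y-m)^2) ∂(gaussianReal m v) = α + γ*t := by
    have h12 : Integrable (fun y : ℝ => α + β*(y-m)) (gaussianReal m v) :=
      (integrable_const α).add (i1.const_mul β)
    rw [integral_add h12 (i2.const_mul γ),
      integral_add (integrable_const α) (i1.const_mul β), integral_const_mul, integral_const_mul,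
      v1, v2]
    simp
  have hpdf : ∀ y, gaussianPDFReal m v y = (Real.sqrt (2*π*t))⁻¹ * Real.exp (-(y-m)^2/(2*t)) := by
    intro y; rw [gaussianPDFReal, hvt]
  constructor
  · rw [gaussianReal_of_var_ne_zero m hv0] at iall
    rw [integrable_withDensity_iff_integrable_smul₀' (by fun_prop) (by simp [gaussianPDF])] at iall
    refine iall.congr (Filter.Eventually.of_forall fun y => ?_)
    simp only [toReal_gaussianPDF, smul_eq_mul, hpdf]
  · rw [integral_gaussianReal_eq_integral_smul hv0] at vall
    rw [← vall]
    refine integral_congr_ae (Filter.Eventually.of_forall fun y => ?_)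
    simp only [smul_eq_mul, hpdf]

lemma alg_aux {g0 g1 A B s : ℝ} (h0 : 0 ≤ g0) (h1 : 0 ≤ g1) (hA : A ≤ s) (hB : s ≤ B) :
    g0 * A - g1 * B ≤ s * (g0 - g1) := by
  have := mul_le_mul_of_nonneg_left hA h0
  have := mul_le_mul_of_nonneg_left hB h1
  linarith

lemma hker_eq (t x y : ℝ) (ht : 0 < t) (hx : 1 < x) (hy : 1 < y) :
    Real.sqrt (x*y) * hker t x y * y = Real.sqrt (y/x) *
      ((Real.sqrt (2*π*t))⁻¹ * Real.exp (-(y-x)^2/(2*t)) -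
       (Real.sqrt (2*π*t))⁻¹ * Real.exp (-(y-(2-x))^2/(2*t))) := by
  have hx0 : 0 < x := by linarith
  have hy0 : 0 < y := by linarith
  have e1 : (2*π*t)^(-(1:ℝ)/2) = (Real.sqrt (2*π*t))⁻¹ := by
    rw [neg_div, Real.rpow_neg (by positivity), Real.sqrt_eq_rpow]
  have e2 : (y-x)^2 = (x-y)^2 := by ring
  have e3 : (y-(2-x))^2 = (x+y-2)^2 := by ring
  have e4 : Real.sqrt (x*y) * (x*y)⁻¹ * y = Real.sqrt (y/x) := by
    rw [Real.sqrt_mul hx0.le, Real.sqrt_div hy0.le]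
    have h1 := Real.mul_self_sqrt hx0.le
    have h3 : 0 < Real.sqrt x := Real.sqrt_pos.2 hx0
    field_simp
    nlinarith
  unfold hker
  rw [e1, e2, e3, ← e4]
  ring

lemma S_upper {p₁ : ℝ → ℝ → ℝ → ℝ} {q : ℝ → ℝ → ℝ} (H : BesselHK p₁ q) (t x : ℝ)
    (ht : 0 < t) (hx : 1 < x) :
    (∫ u in Set.Ioi t, q x u) ≤ Real.exp (t/8) * (1 + 1/(16*x^2) * t) := by
  have hx0 : 0 < x := by linarith
  rw [← H.mass ht hx, ← integral_indicator measurableSet_Ioi]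
  obtain ⟨hi, hv⟩ := gauss_quad x t ht 1 (1/(2*x)) (1/(16*x^2))
  rw [← hv, ← integral_const_mul]
  have hquad : ∀ y : ℝ, 0 ≤ 1 + 1/(2*x)*(y-x) + 1/(16*x^2)*(y-x)^2 := by
    intro y
    have : 1 + 1/(2*x)*(y-x) + 1/(16*x^2)*(y-x)^2 = (1 + (y-x)/(4*x))^2 := by
      field_simp; ring
    rw [this]; positivity
  refine integral_mono_of_nonneg (Filter.Eventually.of_forall fun y => ?_) (hi.const_mul _)
    (Filter.Eventually.of_forall fun y => ?_)
  · refine Set.indicator_nonneg (fun y hy => ?_) y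
    have hy : 1 < y := hy
    exact mul_nonneg (H.p₁_nonneg ht hx hy) (by linarith)
  · by_cases hy : y ∈ Set.Ioi (1:ℝ)
    · simp only [Set.indicator_of_mem hy]
      have hy : 1 < y := hy
      have hy0 : 0 < y := by linarith
      have h1 := (H.ac ht hx hy).2
      have h2 := hker_eq t x y ht hx hy
      have h3 : Real.sqrt (y/x) ≤ 1 + 1/(2*x)*(y-x) + 1/(16*x^2)*(y-x)^2 := by
        have : Real.sqrt (y/x) ≤ (1 + y/x)/2 := by
          have := Real.sq_sqrt (show 0 ≤ y/x by positivity)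
          nlinarith [sq_nonneg (Real.sqrt (y/x) - 1)]
        have e : 1 + 1/(2*x)*(y-x) = (1 + y/x)/2 := by field_simp; ring
        have : 0 ≤ 1/(16*x^2)*(y-x)^2 := by positivity
        linarith
      have h4 : p₁ t x y * y ≤ Real.exp (t/8) * Real.sqrt (x*y) * hker t x y * y := by
        gcongr
      have h5 : 0 ≤ (Real.sqrt (2*π*t))⁻¹ * Real.exp (-(y-(2-x))^2/(2*t)) := by positivity
      have h6 : 0 ≤ (Real.sqrt (2*π*t))⁻¹ * Real.exp (-(y-x)^2/(2*t)) := by positivity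
      have h7 := Real.sqrt_nonneg (y/x)
      calc _ ≤ Real.exp (t/8) * (Real.sqrt (x*y) * hker t x y * y) := by linarith
        _ ≤ _ := by
          rw [h2]
          refine mul_le_mul_of_nonneg_left ?_ (Real.exp_pos _).le
          nlinarith [mul_le_mul_of_nonneg_left h3 h6, mul_nonneg h7 h5]
    · simp only [Set.indicator_of_notMem hy]
      have := hquad y
      positivity

lemma S_pos {p₁ : ℝ → ℝ → ℝ → ℝ} {q : ℝ → ℝ → ℝ} (H : BesselHK p₁ q) (t x : ℝ)
    (ht : 0 < t) (hx : 1 < x) : 0 < (∫ u in Set.Ioi t, q x u) := by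
  obtain ⟨c', C', hc', _, h⟩ := H.surv
  refine lt_of_lt_of_le ?_ (h ht hx).1
  have h1 : 0 < Real.log x := Real.log_pos hx
  have h2 : 0 < Real.log (1 + Real.sqrt t) := Real.log_pos (by
    have := Real.sqrt_pos.2 ht; linarith)
  have : 0 < min 1 (Real.log x / Real.log (1+Real.sqrt t)) := lt_min one_pos (by positivity)
  positivity

set_option maxHeartbeats 2000000 in
lemma S_lower {p₁ : ℝ → ℝ → ℝ → ℝ} {q : ℝ → ℝ → ℝ} (H : BesselHK p₁ q) (x : ℝ)
    (hx : 1 < x) : ∃ K : ℝ, ∀ t : ℝ, 0 < t → 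
    1 - K * t ≤ (∫ u in Set.Ioi t, q x u) := by
  have hx0 : 0 < x := by linarith
  have hx1 : 0 < x - 1 := by linarith
  set K1 : ℝ := 1/(x-1)^2 with hK1
  set K2 : ℝ := 1/(x-1)^2 + 1/(x-1) with hK2
  refine ⟨K1 + K2, fun t ht => ?_⟩
  obtain ⟨hi, hv⟩ := gauss_quad x t ht 1 (1/(2*x)) (-K1)
  obtain ⟨hi2, hv2⟩ := gauss_quad (2-x) t ht 0 0 K2
  have hne := S_pos H t x ht hx
  rw [← H.mass ht hx] at hne ⊢
  have hint : IntegrableOn (fun y => p₁ t x y * y) (Set.Ioi 1) := by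
    by_contra hcon
    rw [integral_undef hcon] at hne
    exact lt_irrefl _ hne
  have e : 1 - (K1+K2)*t = (1 + -K1*t) - (0 + K2*t) := by ring
  rw [e, ← hv, ← hv2, ← integral_sub hi hi2, ← integral_indicator measurableSet_Ioi]
  refine integral_mono (hi.sub hi2) ((integrable_indicator_iff measurableSet_Ioi).2 hint) fun y => ?_
  have h5 : 0 ≤ (Real.sqrt (2*π*t))⁻¹ * Real.exp (-(y-(2-x))^2/(2*t)) := by positivity
  have h6 : 0 ≤ (Real.sqrt (2*π*t))⁻¹ * Real.exp (-(y-x)^2/(2*t)) := by positivity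
  simp only []
  set g1 := (Real.sqrt (2*π*t))⁻¹ * Real.exp (-(y-(2-x))^2/(2*t))
  set g0 := (Real.sqrt (2*π*t))⁻¹ * Real.exp (-(y-x)^2/(2*t))
  have hK2p : 0 ≤ K2 := by positivity
  by_cases hy : y ∈ Set.Ioi (1:ℝ)
  · simp only [Set.indicator_of_mem hy]
    have hy : 1 < y := hy
    have hy0 : 0 < y := by linarith
    have h1 := (H.ac ht hx hy).1
    have h2 := hker_eq t x y ht hx hy
    have h4 : Real.sqrt (x*y) * hker t x y * y ≤ p₁ t x y * y := by gcongr
    rw [h2] at h4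
    refine le_trans ?_ h4
    have h7 := Real.sqrt_nonneg (y/x)
    have h8 := Real.sq_sqrt (show 0 ≤ y/x by positivity)
    have hA : 1 + 1/(2*x)*(y-x) + -K1*(y-x)^2 ≤ Real.sqrt (y/x) := by
      have hk : 1/x^2 ≤ K1 := by
        rw [hK1]; apply one_div_le_one_div_of_le (by positivity); nlinarith
      have h9 : 1 + 1/(2*x)*(y-x) - 1/x^2*(y-x)^2 ≤ Real.sqrt (y/x) := by
        have e9 : 1 + 1/(2*x)*(y-x) - 1/x^2*(y-x)^2 = 1 + (y/x-1)/2 - (y/x-1)^2 := by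
          field_simp
        rw [e9]
        generalize Real.sqrt (y/x) = a at h7 h8 ⊢
        rw [← h8]
        have : a - (1 + (a^2-1)/2 - (a^2-1)^2) = (a-1)^2*((a+1)^2-1/2) := by ring
        have : 0 ≤ (a-1)^2*((a+1)^2-1/2) := mul_nonneg (sq_nonneg _) (by nlinarith)
        linarith
      nlinarith [mul_le_mul_of_nonneg_right hk (sq_nonneg (y-x))]
    have hB : Real.sqrt (y/x) ≤ 0 + 0*(y-(2-x)) + K2*(y-(2-x))^2 := by
      set b := y-(2-x) with hb
      have hbx : x - 1 ≤ b := by rw [hb]; linarith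
      have hb1 : 1 ≤ b/(x-1) := by rw [le_div_iff₀ hx1]; linarith
      have hs : Real.sqrt (y/x) ≤ 1 + b := by
        rw [Real.sqrt_le_left (by linarith), div_le_iff₀ hx0]
        have : y ≤ 1 + b := by rw [hb]; linarith
        nlinarith
      have : 0 + 0*b + K2*b^2 = (b/(x-1))^2 + b*(b/(x-1)) := by rw [hK2]; field_simp; ring
      rw [this]
      nlinarith
    exact alg_aux h6 h5 hA hB
  · simp only [Set.indicator_of_notMem hy]
    have hy : y ≤ 1 := not_lt.1 hy
    have hA : 1 + 1/(2*x)*(y-x) + -K1*(y-x)^2 ≤ 0 := by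
      have h1 : 1 ≤ K1*(y-x)^2 := by
        rw [hK1, one_div, inv_mul_eq_div, le_div_iff₀ (by positivity)]; nlinarith
      have h2 : 1/(2*x)*(y-x) ≤ 0 := mul_nonpos_of_nonneg_of_nonpos (by positivity) (by linarith)
      linarith
    have hB : 0 ≤ 0 + 0*(y-(2-x)) + K2*(y-(2-x))^2 := by
      have : 0 ≤ K2*(y-(2-x))^2 := by positivity
      linarith
    have h10 := mul_nonneg h5 hB
    have h11 := mul_nonpos_of_nonneg_of_nonpos h6 hA
    linarith

lemma q_total {p₁ : ℝ → ℝ → ℝ → ℝ} {q : ℝ → ℝ → ℝ} (H : BesselHK p₁ q) (x : ℝ) (hx : 1 < x) :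
    IntegrableOn (q x) (Set.Ioi 0) ∧ ∫ u in Set.Ioi 0, q x u = 1 := by
  have hI : ∀ t, 0 < t → IntegrableOn (q x) (Set.Ioi t) := by
    intro t ht
    have hne := S_pos H t x ht hx
    by_contra hcon
    rw [integral_undef hcon] at hne
    exact lt_irrefl _ hne
  have ha : Filter.Tendsto (fun n : ℕ => 1/((n:ℝ)+1)) Filter.atTop (nhds 0) :=
    tendsto_one_div_add_atTop_nhds_zero_nat
  have hpos : ∀ n : ℕ, 0 < 1/((n:ℝ)+1) := fun n => by positivity
  have hcov : AECover (volume.restrict (Set.Ioi (0:ℝ))) Filter.atTop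
      (fun n : ℕ => Set.Ioi (1/((n:ℝ)+1))) := aecover_Ioi_of_Ioi ha
  have hres : ∀ n : ℕ, (volume.restrict (Set.Ioi (0:ℝ))).restrict (Set.Ioi (1/((n:ℝ)+1)))
      = volume.restrict (Set.Ioi (1/((n:ℝ)+1))) := by
    intro n
    rw [Measure.restrict_restrict measurableSet_Ioi]
    congr 1
    exact Set.inter_eq_left.2 (Set.Ioi_subset_Ioi (hpos n).le)
  obtain ⟨K, hK⟩ := S_lower H x hx
  have hlim : Filter.Tendsto (fun n : ℕ => ∫ u in Set.Ioi (1/((n:ℝ)+1)), q x u)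
      Filter.atTop (nhds 1) := by
    refine tendsto_of_tendsto_of_tendsto_of_le_of_le (g := fun n : ℕ => 1 - K*(1/((n:ℝ)+1)))
      (h := fun n : ℕ => Real.exp ((1/((n:ℝ)+1))/8) * (1 + 1/(16*x^2) * (1/((n:ℝ)+1)))) ?_ ?_
      (fun n => hK _ (hpos n)) (fun n => S_upper H _ x (hpos n) hx)
    · have := (Continuous.tendsto (f := fun a : ℝ => 1 - K*a) (by fun_prop) 0).comp ha
      simpa [Function.comp_def] using this
    · have := (Continuous.tendsto (f := fun a : ℝ => Real.exp (a/8) * (1 + 1/(16*x^2)*a))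
        (by fun_prop) 0).comp ha
      simpa [Function.comp_def] using this
  have hint : IntegrableOn (q x) (Set.Ioi 0) := by
    refine hcov.integrable_of_integral_tendsto_of_nonneg_ae 1 (fun n => ?_) ?_ ?_
    · rw [IntegrableOn, hres]; exact hI _ (hpos n)
    · refine (ae_restrict_iff' measurableSet_Ioi).2 ?_
      exact Filter.Eventually.of_forall fun u hu => H.q_nonneg hx hu
    · simpa only [hres] using hlim
  refine ⟨hint, ?_⟩
  have := hcov.integral_tendsto_of_countably_generated hint
  simp only [hres] at this
  exact tendsto_nhds_unique this hlim

lemma q_u_bound {p₁ : ℝ → ℝ → ℝ → ℝ} {q : ℝ → ℝ → ℝ} (H : BesselHK p₁ q) :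
    ∃ C : ℝ, 0 < C ∧ ∀ x r u : ℝ, 1 < x → x ≤ r → 0 < u →
      q x u * u ≤ C * Real.log x * (Real.sqrt r * u^(-(1:ℝ)/2) + 1/(1+Real.log r)) := by
  obtain ⟨c, C, hc, hcC, hq⟩ := H.q1
  have hC : 0 < C := by linarith
  refine ⟨2*C, by positivity, fun x r u hx hxr hu => ?_⟩
  have hx0 : 0 < x := by linarith
  have hlx : 0 < Real.log x := Real.log_pos hx
  have hlr : 0 < Real.log r := Real.log_pos (by linarith)
  have hW : (x-1)/x ≤ Real.log x := by
    have := Real.one_sub_inv_le_log_of_pos hx0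
    have e : (x-1)/x = 1 - x⁻¹ := by field_simp
    linarith
  have hW1 : (x-1)/x ≤ 1 := by rw [div_le_one hx0]; linarith
  have hW0 : 0 ≤ (x-1)/x := div_nonneg (by linarith) hx0.le
  have hexp : Real.exp (-(x-1)^2/(2*u)) ≤ 1 := Real.exp_le_one_iff.2 (by
    rw [neg_div]; have : 0 ≤ (x-1)^2/(2*u) := by positivity
    linarith)
  have hexp0 := Real.exp_pos (-(x-1)^2/(2*u))
  have hup : 0 < u^(-(1:ℝ)/2) := Real.rpow_pos_of_pos hu _
  have hsx : 0 < Real.sqrt x := Real.sqrt_pos.2 hx0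
  have hsxr : Real.sqrt x ≤ Real.sqrt r := Real.sqrt_le_sqrt hxr
  rcases lt_or_ge u (2*x) with h | h
  · have h1 := ((hq hx hu).1 h).2
    have e1 : u^(-(3:ℝ)/2) * u = u^(-(1:ℝ)/2) := by
      nth_rewrite 2 [← Real.rpow_one u]
      rw [← Real.rpow_add hu]; norm_num
    have e2 : (x-1)/Real.sqrt x = (x-1)/x * Real.sqrt x := by
      have := Real.mul_self_sqrt hx0.le
      field_simp
      rw [sq, this, mul_comm]
    have e3 : (x-1)/Real.sqrt x ≤ Real.log x * Real.sqrt r := by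
      rw [e2]; gcongr
    have e4 : 0 ≤ (x-1)/Real.sqrt x := div_nonneg (by linarith) hsx.le
    calc q x u * u ≤ C * (((x-1)/Real.sqrt x) * u^(-(3:ℝ)/2) * Real.exp (-(x-1)^2/(2*u))) * u := by
          gcongr
      _ = C * (((x-1)/Real.sqrt x) * u^(-(1:ℝ)/2) * Real.exp (-(x-1)^2/(2*u))) := by
          rw [← e1]; ring
      _ ≤ C * ((Real.log x * Real.sqrt r) * u^(-(1:ℝ)/2) * 1) := by gcongr
      _ ≤ _ := by
          have h2 : 0 ≤ 1/(1+Real.log r) := by positivity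
          have h3 : 0 ≤ C * Real.log x * (Real.sqrt r * u^(-(1:ℝ)/2)) := by positivity
          have h4 : 0 ≤ C * Real.log x * (1/(1+Real.log r)) := by positivity
          nlinarith
  · have h1 := ((hq hx hu).2 h).2
    have hu1 : 1 ≤ u := by linarith
    have hlu : 0 ≤ Real.log u := Real.log_nonneg hu1
    have hl1 : Real.log u ≤ Real.log (u+x) := Real.log_le_log hu (by linarith)
    have hl2 : 0 ≤ Real.log (1+u/x) := Real.log_nonneg (by
      have : 0 ≤ u/x := by positivity
      linarith)
    have hk : (x-1)/x*(1+Real.log x) ≤ 2 * Real.log x := by nlinarith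
    have hk0 : 0 ≤ (x-1)/x*(1+Real.log x) := by positivity
    have hfin : 1/(1+Real.log u) ≤ Real.sqrt r * u^(-(1:ℝ)/2) + 1/(1+Real.log r) := by
      rcases le_total u r with h' | h'
      · have h2 : 1/(1+Real.log u) ≤ 1 := by rw [div_le_one (by positivity)]; linarith
        have h3 : 0 ≤ 1/(1+Real.log r) := by positivity
        have h4 : 1 ≤ Real.sqrt r * u^(-(1:ℝ)/2) := by
          rw [neg_div, Real.rpow_neg hu.le, ← Real.sqrt_eq_rpow, ← div_eq_mul_inv,
            le_div_iff₀ (Real.sqrt_pos.2 hu), one_mul]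
          exact Real.sqrt_le_sqrt h'
        linarith
      · have h2 : 1/(1+Real.log u) ≤ 1/(1+Real.log r) := by
          apply one_div_le_one_div_of_le (by positivity)
          have := Real.log_le_log (by linarith) h'
          linarith
        have : 0 ≤ Real.sqrt r * u^(-(1:ℝ)/2) := by positivity
        linarith
    calc q x u * u ≤ C * (((x-1)/x) * ((1+Real.log x)/((1+Real.log (u+x))*(1+Real.log (1+u/x)))) *
        u⁻¹ * Real.exp (-(x-1)^2/(2*u))) * u := by gcongr
      _ = C * ((((x-1)/x) * (1+Real.log x))/((1+Real.log (u+x))*(1+Real.log (1+u/x))) *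
        Real.exp (-(x-1)^2/(2*u))) := by field_simp
      _ ≤ C * ((2*Real.log x)/((1+Real.log u)*1) * 1) := by
          gcongr
          all_goals linarith
      _ = 2*C*Real.log x * (1/(1+Real.log u)) := by ring
      _ ≤ _ := by gcongr

lemma exp_meas_aux (a r : ℝ) : Measurable fun u : ℝ => Real.exp (-(a*(u/r^2))) :=
  Real.measurable_exp.comp (((measurable_id.div_const (r^2)).const_mul a).neg)

lemma rpow_int (r k : ℝ) (hr : 0 < r) :
    IntegrableOn (fun u : ℝ => Real.sqrt r * u^(-(1:ℝ)/2) + k) (Set.Ioc 0 (r^2)) ∧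
    ∫ u in Set.Ioc 0 (r^2), (Real.sqrt r * u^(-(1:ℝ)/2) + k) = 2*r*Real.sqrt r + k*r^2 := by
  have h0 : (0:ℝ) ≤ r^2 := by positivity
  have hi : IntervalIntegrable (fun u : ℝ => Real.sqrt r * u^(-(1:ℝ)/2)) volume 0 (r^2) :=
    (intervalIntegral.intervalIntegrable_rpow' (by norm_num)).const_mul _
  have hk : IntervalIntegrable (fun u : ℝ => k) volume 0 (r^2) := intervalIntegrable_const
  refine ⟨(intervalIntegrable_iff_integrableOn_Ioc_of_le h0).1 (hi.add hk), ?_⟩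
  rw [← intervalIntegral.integral_of_le h0, intervalIntegral.integral_add hi hk,
    intervalIntegral.integral_const_mul, integral_rpow (Or.inl (by norm_num))]
  have e : (r^2)^(-(1:ℝ)/2+1) = r := by
    rw [show -(1:ℝ)/2+1 = 1/2 by norm_num, ← Real.sqrt_eq_rpow, Real.sqrt_sq hr.le]
  rw [e, Real.zero_rpow (by norm_num)]
  simp
  ring

set_option maxHeartbeats 4000000 in
theorem bessel_heat_kernel_estimate_mixed (p₁ : ℝ → ℝ → ℝ → ℝ) (q : ℝ → ℝ → ℝ)
    (H : BesselHK p₁ q) :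
    ∃ c C : ℝ, 0 < c ∧ c ≤ C ∧
      ∀ t x y : ℝ, 0 < t → 1 < x → x ≤ y → x*y < t → 16*t ≤ y^2 →
        c * (Real.log x / Real.log (3*t/y)) * pk t x y ≤ p₁ t x y ∧
        p₁ t x y ≤ C * (Real.log x / Real.log (3*t/y)) * pk t x y := by
  obtain ⟨c', C', hc', hcC', hS⟩ := H.surv
  obtain ⟨K, hK, hqu⟩ := q_u_bound H
  have hκ : Real.exp (-(3/16:ℝ)) < 1 := (Real.exp_lt_exp.2 (by norm_num : -(3/16:ℝ) < 0)).trans_eq Real.exp_zero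
  have hκ0 := Real.exp_pos (-(3/16:ℝ))
  set κ : ℝ := 1 - Real.exp (-(3/16:ℝ)) with hκd
  have hκp : 0 < κ := by rw [hκd]; linarith
  refine ⟨c'*κ/2, 6 + 2*C' + 20*K, by positivity, by nlinarith, ?_⟩
  intro t x y ht hx hxy hxyt h16
  have hy1 : 1 < y := by linarith
  have hy0 : 0 < y := by linarith
  have hyt : y < t := by nlinarith
  have hy16 : 16 < y := by nlinarith
  obtain ⟨r, hr⟩ : ∃ r, r = t/y := ⟨_, rfl⟩
  have htr : t = r*y := by rw [hr]; field_simp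
  have hxr : x ≤ r := by rw [hr, le_div_iff₀ hy0]; linarith
  have hr1 : 1 < r := by linarith
  have hr0 : 0 < r := by linarith
  have hr2t : r^2 ≤ t/16 := by
    have : 16*r ≤ y := by
      have : 16*r*y ≤ y*y := by rw [htr] at h16; nlinarith
      exact le_of_mul_le_mul_right this hy0
    rw [htr]; nlinarith
  have hlam : ∀ u : ℝ, u*y^2/t^2 = u/r^2 := by
    intro u; rw [htr]; field_simp
  have h3r : 3*t/y = 3*r := by rw [htr]; field_simp
  rw [h3r]
  -- logarithms
  have hlx : 0 < Real.log x := Real.log_pos hx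
  have hlr : 0 < Real.log r := Real.log_pos hr1
  have hlxr : Real.log x ≤ Real.log r := Real.log_le_log (by linarith) hxr
  have hL : 0 < Real.log (3*r) := Real.log_pos (by linarith)
  have hLe : Real.log (3*r) = Real.log 3 + Real.log r := Real.log_mul (by norm_num) hr0.ne'
  have hl3 : Real.log 3 ≤ 2 := by
    have := Real.log_le_sub_one_of_pos (show (0:ℝ) < 3 by norm_num); linarith
  have hL1 : Real.log (1+r) ≤ Real.log (3*r) := Real.log_le_log (by linarith) (by linarith)
  have hl1r : 0 < Real.log (1+r) := Real.log_pos (by linarith)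
  have hL2 : Real.log (3*r) ≤ 2*Real.log (1+r) := by
    have h1 : Real.log ((1+r)^2) = 2*Real.log (1+r) := by rw [Real.log_pow]; norm_num
    rw [← h1]; exact Real.log_le_log (by linarith) (by nlinarith)
  have hsr : 0 < Real.sqrt r := Real.sqrt_pos.2 hr0
  have hsq := Real.sq_sqrt hr0.le
  have hL3 : 1 + Real.log r ≤ 2*Real.sqrt r := by
    have h1 := Real.log_le_sub_one_of_pos hsr
    rw [Real.log_sqrt hr0.le] at h1
    linarith
  set Q := Real.log x / Real.log (3*r) with hQ
  have hQ0 : 0 < Q := by positivity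
  -- survival probability at time r^2
  have hS2 := hS (show 0 < r^2 by positivity) hx
  rw [Real.sqrt_sq hr0.le] at hS2
  have hratio : Real.log x / Real.log (1+r) ≤ 1 := by
    rw [div_le_one hl1r]; exact Real.log_le_log (by linarith) (by linarith)
  rw [min_eq_right hratio] at hS2
  have hSl : c' * Q ≤ ∫ u in Set.Ioi (r^2), q x u := by
    refine le_trans ?_ hS2.1
    rw [hQ]; gcongr
  have hSu : (∫ u in Set.Ioi (r^2), q x u) ≤ 2*C'*Q := by
    refine hS2.2.trans ?_
    have : Real.log x / Real.log (1+r) ≤ 2*Q := by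
      rw [hQ, div_le_iff₀ hl1r]
      have : 2*(Real.log x / Real.log (3*r))*Real.log (1+r)
        = Real.log x * (2*Real.log (1+r))/Real.log (3*r) := by ring
      rw [this, le_div_iff₀ hL]
      gcongr
    have hC'0 : 0 ≤ C' := by linarith
    have := mul_le_mul_of_nonneg_left this hC'0
    linarith
  -- comparison of kernels
  obtain ⟨hp1, hp2⟩ := pk_compare t x y ht hx hy1 hxyt h16
  have hP := pk_pos t 1 y ht one_pos hy0
  rw [hlam] at hp2
  set P := pk t 1 y with hPd
  have hd1 : (x^2-1)/r^2 ≤ 1 := by rw [div_le_one (by positivity)]; nlinarith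
  have hd6 : (x^2-1)/r^2 ≤ 6*Q := by
    rw [hQ, ← mul_div_assoc, le_div_iff₀ hL]
    have hd2 : (x^2-1)/r^2 ≤ 2*Real.log x := by
      have h1 := Real.one_sub_inv_le_log_of_pos (show 0 < x^2 by positivity)
      rw [Real.log_pow] at h1
      push_cast at h1
      refine le_trans ?_ h1
      have : 1 - (x^2)⁻¹ = (x^2-1)/x^2 := by field_simp
      rw [this]
      have : 0 ≤ x^2 - 1 := by nlinarith
      gcongr
    have hd0 : 0 ≤ (x^2-1)/r^2 := div_nonneg (by nlinarith) (by positivity)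
    have hd3 : (x^2-1)/r^2 * Real.log r ≤ 2 * Real.log x := by
      -- split at x = sqrt r
      rcases le_total (x^2) r with h | h
      · have h1 : (x^2-1)/x^2 ≤ 2*Real.log x := by
          have h1 := Real.one_sub_inv_le_log_of_pos (show 0 < x^2 by positivity)
          rw [Real.log_pow] at h1
          push_cast at h1
          have : 1 - (x^2)⁻¹ = (x^2-1)/x^2 := by field_simp
          linarith
        have h2 : Real.log r ≤ r := by
          have := Real.log_le_sub_one_of_pos hr0; linarith
        have h3 : x^2 - 1 ≤ 2*Real.log x*x^2 := by
          rwa [div_le_iff₀ (by positivity)] at h1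
        rw [div_mul_eq_mul_div, div_le_iff₀ (by positivity)]
        have h4 : 0 ≤ x^2 - 1 := by nlinarith
        calc (x^2-1)*Real.log r ≤ (2*Real.log x*x^2)*r := by gcongr
          _ ≤ (2*Real.log x*r)*r := by gcongr
          _ = _ := by ring
      · have h1 : Real.log r ≤ 2*Real.log x := by
          have h2 := Real.log_le_log hr0 h
          rw [Real.log_pow] at h2
          exact_mod_cast h2
        nlinarith
    rw [hLe]
    have h8 := mul_le_mul_of_nonneg_left hl3 hd0
    linarith
  -- the total mass
  obtain ⟨hqi, hq1⟩ := q_total H x hx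
  have hRp : 0 < r^2 := by positivity
  have hsplit : (∫ u in Set.Ioc 0 (r^2), q x u) + ∫ u in Set.Ioi (r^2), q x u = 1 := by
    rw [← hq1, ← setIntegral_union (Set.Ioc_disjoint_Ioi le_rfl) measurableSet_Ioi
      (hqi.mono_set Set.Ioc_subset_Ioi_self) (hqi.mono_set (Set.Ioi_subset_Ioi hRp.le)),
      Set.Ioc_union_Ioi_eq_Ioi hRp.le]
  have hexpint : ∀ a : ℝ, 0 ≤ a → IntegrableOn (fun u => q x u * Real.exp (-(a*(u/r^2)))) (Set.Ioi 0) := by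
    intro a ha
    refine Integrable.mono' hqi ?_ ?_
    · exact hqi.aestronglyMeasurable.mul
        (exp_meas_aux a r).aestronglyMeasurable
    · refine (ae_restrict_iff' measurableSet_Ioi).2 (Filter.Eventually.of_forall fun u hu => ?_)
      have hu : 0 < u := hu
      have h1 := H.q_nonneg hx hu
      have h2 : Real.exp (-(a*(u/r^2))) ≤ 1 := Real.exp_le_one_iff.2 (by
        have : 0 ≤ a*(u/r^2) := by positivity
        linarith)
      rw [Real.norm_of_nonneg (by positivity)]
      exact mul_le_of_le_one_right h1 h2
  have hsub : Set.Ioo 0 t ⊆ Set.Ioi 0 := Set.Ioo_subset_Ioi_self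
  have hsub2 : Set.Ioc 0 (r^2) ⊆ Set.Ioo 0 t := fun u hu => ⟨hu.1, by
    have := hu.2; linarith⟩
  have hunt := H.hunt ht hx hy1
  have hbound : ∀ u ∈ Set.Ioo 0 t, q x u * pk (t-u) 1 y ≤
      P * (q x u * Real.exp (-(3/16*(u/r^2)))) := by
    intro u hu
    have h1 := pk_upper t y u ht hy16 hyt h16 hu.1 hu.2
    rw [hlam] at h1
    have h2 := H.q_nonneg hx hu.1
    have := mul_le_mul_of_nonneg_left h1 h2
    linarith
  have hnn : ∀ u ∈ Set.Ioo 0 t, 0 ≤ q x u * pk (t-u) 1 y := by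
    intro u hu
    exact mul_nonneg (H.q_nonneg hx hu.1) (pk_pos _ _ _ (by linarith [hu.2]) one_pos hy0).le
  have hgi : IntegrableOn (fun u => P * (q x u * Real.exp (-(3/16*(u/r^2))))) (Set.Ioi 0) :=
    (hexpint (3/16) (by norm_num)).const_mul P
  have hqp : IntegrableOn (fun u => q x u * pk (t-u) 1 y) (Set.Ioo 0 t) := by
    refine Integrable.mono' (hgi.mono_set hsub) ?_ ?_
    · exact (hqi.mono_set hsub).aestronglyMeasurable.mul (pk_meas t y).aestronglyMeasurable
    · refine (ae_restrict_iff' measurableSet_Ioo).2 (Filter.Eventually.of_forall fun u hu => ?_)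
      rw [Real.norm_of_nonneg (hnn u hu)]
      exact hbound u hu
  constructor
  · -- lower bound
    have h1 : ∫ u in Set.Ioo 0 t, q x u * pk (t-u) 1 y ≤
        ∫ u in Set.Ioi 0, P * (q x u * Real.exp (-(3/16*(u/r^2)))) := by
      refine (setIntegral_mono_on hqp (hgi.mono_set hsub) measurableSet_Ioo hbound).trans ?_
      refine setIntegral_mono_set hgi ?_ (Filter.Eventually.of_forall hsub)
      refine (ae_restrict_iff' measurableSet_Ioi).2 (Filter.Eventually.of_forall fun u hu => ?_)
      have := H.q_nonneg hx hu
      simp only [Pi.zero_apply]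
      positivity
    rw [integral_const_mul] at h1
    have h2 : κ * (∫ u in Set.Ioi (r^2), q x u) ≤
        1 - ∫ u in Set.Ioi 0, q x u * Real.exp (-(3/16*(u/r^2))) := by
      rw [← hq1, ← integral_sub hqi (hexpint (3/16) (by norm_num)), ← integral_const_mul]
      have hi := hqi.sub (hexpint (3/16) (by norm_num))
      refine le_trans (setIntegral_mono_on ((hqi.mono_set (Set.Ioi_subset_Ioi hRp.le)).const_mul κ)
        (IntegrableOn.mono_set hi (Set.Ioi_subset_Ioi hRp.le)) measurableSet_Ioi
        (fun u hu => ?_)) (setIntegral_mono_set hi ?_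
          (Filter.Eventually.of_forall (Set.Ioi_subset_Ioi hRp.le)))
      · have hu : r^2 < u := hu
        have h3 := H.q_nonneg hx (hRp.trans hu)
        have h4 : 1 ≤ u/r^2 := by rw [le_div_iff₀ hRp]; linarith
        have h5 : Real.exp (-(3/16*(u/r^2))) ≤ Real.exp (-(3/16:ℝ)) :=
          Real.exp_le_exp.2 (by linarith)
        simp only [Pi.sub_apply]
        rw [hκd]
        have := mul_le_mul_of_nonneg_left h5 h3
        linarith
      · refine (ae_restrict_iff' measurableSet_Ioi).2 (Filter.Eventually.of_forall fun u hu => ?_)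
        have hu : 0 < u := hu
        have h3 := H.q_nonneg hx hu
        have h5 : Real.exp (-(3/16*(u/r^2))) ≤ 1 := Real.exp_le_one_iff.2 (by
          have : 0 ≤ u/r^2 := by positivity
          linarith)
        simp only [Pi.sub_apply, Pi.zero_apply]
        have := mul_le_mul_of_nonneg_left h5 h3
        linarith
    have h3 : κ*(c'*Q) ≤ 1 - ∫ u in Set.Ioi 0, q x u * Real.exp (-(3/16*(u/r^2))) :=
      le_trans (by gcongr) h2
    have h4 : pk t x y ≤ 2*P := by
      have := mul_le_mul_of_nonneg_left hd1 hP.le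
      linarith
    have h5 : P*(κ*(c'*Q)) ≤ p₁ t x y := by
      have := mul_le_mul_of_nonneg_left h3 hP.le
      rw [hunt]; linarith
    refine le_trans ?_ h5
    calc c'*κ/2*Q*pk t x y ≤ c'*κ/2*Q*(2*P) := by gcongr
      _ = _ := by ring
  · -- upper bound
    have hei := (hexpint 2 (by norm_num)).mono_set (show Set.Ioc 0 (r^2) ⊆ Set.Ioi 0 from Set.Ioc_subset_Ioi_self)
    have hqi' := hqi.mono_set (show Set.Ioc 0 (r^2) ⊆ Set.Ioi 0 from Set.Ioc_subset_Ioi_self)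
    have h1 : P * ∫ u in Set.Ioc 0 (r^2), q x u * Real.exp (-(2*(u/r^2))) ≤
        ∫ u in Set.Ioo 0 t, q x u * pk (t-u) 1 y := by
      rw [← integral_const_mul]
      refine (setIntegral_mono_on (hei.const_mul P) (hqp.mono_set hsub2) measurableSet_Ioc
        fun u hu => ?_).trans (setIntegral_mono_set hqp ?_ (Filter.Eventually.of_forall hsub2))
      · have h2 := pk_lower t y u ht hy1 hu.1 (by linarith [hu.2])
        rw [hlam] at h2
        have h3 := H.q_nonneg hx hu.1
        have := mul_le_mul_of_nonneg_left h2 h3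
        linarith
      · exact (ae_restrict_iff' measurableSet_Ioo).2 (Filter.Eventually.of_forall hnn)
    obtain ⟨hri, hrv⟩ := rpow_int r (1/(1+Real.log r)) hr0
    have h2 : (∫ u in Set.Ioc 0 (r^2), q x u) - (∫ u in Set.Ioc 0 (r^2), q x u * Real.exp (-(2*(u/r^2))))
        ≤ 2/r^2*(K*Real.log x) * (2*r*Real.sqrt r + 1/(1+Real.log r)*r^2) := by
      rw [← integral_sub hqi' hei, ← hrv, ← integral_const_mul]
      refine setIntegral_mono_on (hqi'.sub hei) (hri.const_mul _) measurableSet_Ioc fun u hu => ?_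
      have h3 := H.q_nonneg hx hu.1
      have h4 := hqu x r u hx hxr hu.1
      have h5 := Real.add_one_le_exp (-(2*(u/r^2)))
      calc q x u - q x u * Real.exp (-(2*(u/r^2))) ≤ q x u * (2*(u/r^2)) := by
            have := mul_le_mul_of_nonneg_left h5 h3
            linarith
        _ = 2/r^2 * (q x u * u) := by ring
        _ ≤ 2/r^2 * (K * Real.log x * (Real.sqrt r * u^(-(1:ℝ)/2) + 1/(1+Real.log r))) := by gcongr
        _ = _ := by ring
    have h3 : 2/r^2*(K*Real.log x) * (2*r*Real.sqrt r + 1/(1+Real.log r)*r^2) ≤ 20*K*Q := by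
      have e1 : 2/r^2*(K*Real.log x) * (2*r*Real.sqrt r + 1/(1+Real.log r)*r^2)
          = 2*K*Real.log x*(2*(Real.sqrt r/r) + 1/(1+Real.log r)) := by field_simp
      have e2 : Real.sqrt r/r = 1/Real.sqrt r := by
        rw [div_eq_div_iff hr0.ne' hsr.ne', Real.mul_self_sqrt hr0.le, one_mul]
      have e3 : 1/Real.sqrt r ≤ 4/Real.log (3*r) := by
        rw [div_le_div_iff₀ hsr hL]; linarith
      have e4 : 1/(1+Real.log r) ≤ 2/Real.log (3*r) := by
        rw [div_le_div_iff₀ (by positivity) hL]; linarith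
      rw [e1, e2]
      calc _ ≤ 2*K*Real.log x*(2*(4/Real.log (3*r)) + 2/Real.log (3*r)) := by gcongr
        _ = _ := by rw [hQ]; ring
    have h4 : 1 - (∫ u in Set.Ioc 0 (r^2), q x u * Real.exp (-(2*(u/r^2)))) ≤ 20*K*Q + 2*C'*Q := by
      linarith
    have h5 : p₁ t x y ≤ P*((6 + 2*C' + 20*K)*Q) := by
      have h6 := mul_le_mul_of_nonneg_left h4 hP.le
      have h7 := mul_le_mul_of_nonneg_left hd6 hP.le
      rw [hunt]; linarith
    refine h5.trans ?_
    rw [mul_comm]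
    have hC' : 0 < C' := by linarith
    gcongr
end

section
/- There exists a constant C₁ > 0 such that for all x, y > 1 and t > 0 with xy ≥ t, one has p₁(t,x,y) ≥ C₁ · min(1, (x−1)(y−1)/t) · (xyt)^{−1/2} · exp(−(x−y)²/(2t)). -/
open Real MeasureTheory

theorem bessel_heat_kernel_lower_bound_large (p₁ : ℝ → ℝ → ℝ → ℝ) (q : ℝ → ℝ → ℝ)
    (H : BesselHK p₁ q) :
    ∃ C₁ : ℝ, 0 < C₁ ∧ ∀ t x y : ℝ, 0 < t → 1 < x → 1 < y → t ≤ x*y →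
      C₁ * (min 1 ((x-1)*(y-1)/t) * (Real.sqrt (x*y*t))⁻¹ *
        Real.exp (-(x-y)^2/(2*t))) ≤ p₁ t x y := by
  refine ⟨(Real.sqrt (2*Real.pi))⁻¹ * (1/2), by positivity, ?_⟩
  intro t x y ht hx hy _
  refine le_trans ?_ (H.ac ht hx hy).1
  have hxy : 0 < x * y := by nlinarith
  set a := (x-1)*(y-1)/t with ha
  have ha0 : 0 < a := div_pos (mul_pos (by linarith) (by linarith)) ht
  have h1 : Real.exp (-(x+y-2)^2/(2*t))
      = Real.exp (-(x-y)^2/(2*t)) * Real.exp (-(2*a)) := by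
    rw [← Real.exp_add]; congr 1; rw [ha]; field_simp; ring
  have h2 : (1/2) * min 1 a ≤ 1 - Real.exp (-(2*a)) := by
    have h3 : Real.exp (-(2*a)) ≤ (1 + 2*a)⁻¹ := by
      rw [Real.exp_neg]
      exact inv_anti₀ (by linarith) (by linarith [Real.add_one_le_exp (2*a)])
    have h4 : (1/2) * min 1 a ≤ 1 - (1+2*a)⁻¹ := by
      have h5 : 1 - (1+2*a)⁻¹ = 2*a/(1+2*a) := by field_simp; ring
      rw [h5, le_div_iff₀ (by linarith)]
      rcases le_total 1 a with h | h
      · rw [min_eq_left h]; linarith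
      · rw [min_eq_right h]; nlinarith
    linarith
  have h6 : (2*Real.pi*t)^(-(1:ℝ)/2) = (Real.sqrt (2*Real.pi))⁻¹ * (Real.sqrt t)⁻¹ := by
    rw [show (-(1:ℝ)/2) = -(1/2) by norm_num, Real.rpow_neg (by positivity),
      ← Real.sqrt_eq_rpow, Real.sqrt_mul (by positivity), mul_inv]
  have h7 : Real.sqrt (x*y) * (x*y)⁻¹ = (Real.sqrt (x*y))⁻¹ := by
    have hs : 0 < Real.sqrt (x*y) := Real.sqrt_pos.2 hxy
    have := Real.mul_self_sqrt hxy.le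
    rw [← div_eq_mul_inv, div_eq_iff hxy.ne']
    field_simp
    nlinarith
  unfold hker
  rw [h1, h6, Real.sqrt_mul hxy.le, mul_inv]
  calc _ = ((Real.sqrt (2*Real.pi))⁻¹ * (Real.sqrt t)⁻¹ * (Real.sqrt (x*y))⁻¹ *
        Real.exp (-(x-y)^2/(2*t))) * ((1/2) * min 1 a) := by ring
    _ ≤ ((Real.sqrt (2*Real.pi))⁻¹ * (Real.sqrt t)⁻¹ * (Real.sqrt (x*y))⁻¹ *
        Real.exp (-(x-y)^2/(2*t))) * (1 - Real.exp (-(2*a))) :=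
      mul_le_mul_of_nonneg_left h2 (by positivity)
    _ = _ := by rw [← h7]; ring
end

section
/- There exists a constant C₂ > 0 such that for all x, y > 1 and t > 0 with xy ≥ t, one has p₁(t,x,y) ≤ C₂ · min(1, (x−1)(y−1)/t) · (xyt)^{−1/2} · exp(−(x−y)²/(2t)). -/
open Real MeasureTheory

lemma I0_term_nonneg (z : ℝ) (n : ℕ) : 0 ≤ (z/2)^(2*n) / ((n.factorial : ℝ))^2 := by
  rw [pow_mul]; positivity

lemma I0_nonneg' (z : ℝ) : 0 ≤ I0 z := tsum_nonneg (I0_term_nonneg z)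

lemma central_bound (n : ℕ) : (n.centralBinom : ℝ)^2 * (2*n+1) ≤ 16^n := by
  induction n with
  | zero => simp
  | succ k ih =>
    have h := Nat.succ_mul_centralBinom_succ k
    have h' : ((k:ℝ)+1) * ((k+1).centralBinom : ℝ) = 2*(2*k+1) * (k.centralBinom : ℝ) := by
      exact_mod_cast h
    have hk : (0:ℝ) < (k:ℝ)+1 := by positivity
    have e : ((k+1).centralBinom : ℝ) = 2*(2*k+1) * (k.centralBinom : ℝ) / ((k:ℝ)+1) := by
      rw [eq_div_iff hk.ne']; linarith
    rw [e, div_pow, div_mul_eq_mul_div, div_le_iff₀ (by positivity)]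
    push_cast
    have h0 : (0:ℝ) ≤ (k:ℝ) := by positivity
    have : 4*(2*(k:ℝ)+1)*(2*(k+1)+1) ≤ 16*((k:ℝ)+1)^2 := by nlinarith
    calc _ = ((k.centralBinom : ℝ)^2 * (2*k+1)) * (4*(2*(k:ℝ)+1)*(2*(k+1)+1)) := by ring
      _ ≤ 16^k * (16*((k:ℝ)+1)^2) := by gcongr
      _ = _ := by ring

lemma I0_term_le {z a : ℝ} (ha : 0 < a) (n : ℕ) :
    (z/2)^(2*n) / ((n.factorial : ℝ))^2 ≤
      (a/2) * (z^(2*n) / ((2*n).factorial : ℝ))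
        + (1/(2*a)) * (z^(2*n) / ((2*n+1).factorial : ℝ)) := by
  have hc := central_bound n
  set b : ℝ := (n.centralBinom : ℝ) / 4^n with hb
  have hb2 : b^2 * (2*n+1) ≤ 1 := by
    rw [hb, div_pow, div_mul_eq_mul_div, div_le_one (by positivity), ← pow_mul, mul_comm n 2,
      pow_mul]
    norm_num; exact hc
  have hn1 : (0:ℝ) < 2*n+1 := by positivity
  have hb3 : b^2 ≤ 1/(2*(n:ℝ)+1) := by rw [le_div_iff₀ hn1]; exact hb2
  have h2 : b ≤ a/2 + (1/(2*a)) * (1/(2*(n:ℝ)+1)) := by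
    have : b ≤ a/2 + (1/(2*a)) * b^2 := by
      have : a/2 + (1/(2*a)) * b^2 - b = (a-b)^2/(2*a) := by field_simp; ring
      have h3 : 0 ≤ (a-b)^2/(2*a) := by positivity
      linarith
    have h4 : (1/(2*a)) * b^2 ≤ (1/(2*a)) * (1/(2*(n:ℝ)+1)) := by gcongr
    linarith
  have hf : ((2*n).factorial : ℝ) = (n.centralBinom : ℝ) * (n.factorial : ℝ)^2 := by
    have := Nat.choose_mul_factorial_mul_factorial (show n ≤ 2*n by omega)
    rw [show 2*n - n = n by omega, ← Nat.centralBinom_eq_two_mul_choose] at this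
    rw [← this]; push_cast; ring
  have hcpos : (0:ℝ) < n.centralBinom := by exact_mod_cast Nat.centralBinom_pos n
  have hfp : (0:ℝ) < n.factorial := by exact_mod_cast Nat.factorial_pos n
  have hL : (z/2)^(2*n) / ((n.factorial : ℝ))^2 = (z^(2*n) / ((2*n).factorial : ℝ)) * b := by
    rw [hf, hb, div_pow, pow_mul 2 2 n]; norm_num; field_simp
  have hR : z^(2*n) / ((2*n+1).factorial : ℝ)
      = (z^(2*n) / ((2*n).factorial : ℝ)) * (1/(2*(n:ℝ)+1)) := by
    rw [Nat.factorial_succ]; push_cast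
    have : (0:ℝ) < (2*n).factorial := by exact_mod_cast Nat.factorial_pos _
    field_simp
  rw [hL, hR]
  have hz : 0 ≤ z^(2*n) / ((2*n).factorial : ℝ) := by rw [pow_mul]; positivity
  calc _ ≤ (z^(2*n) / ((2*n).factorial : ℝ)) * (a/2 + (1/(2*a)) * (1/(2*(n:ℝ)+1))) := by gcongr
    _ = _ := by ring

lemma I0_le {z : ℝ} (hz : 0 < z) : I0 z ≤ Real.exp z * (Real.sqrt z)⁻¹ := by
  have hs : 0 < Real.sqrt z := Real.sqrt_pos.2 hz
  have hss : Real.sqrt z * Real.sqrt z = z := Real.mul_self_sqrt hz.le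
  set a := (Real.sqrt z)⁻¹ with hadef
  have ha : 0 < a := inv_pos.2 hs
  have h1 := (Real.hasSum_cosh z).mul_left (a/2)
  have h2 : HasSum (fun n : ℕ => (1/(2*a)) * (z^(2*n) / ((2*n+1).factorial : ℝ)))
      ((1/(2*a)) * (Real.sinh z / z)) := by
    refine HasSum.mul_left _ ?_
    refine ((Real.hasSum_sinh z).div_const z).congr_fun ?_
    intro n
    rw [pow_succ]; field_simp
  have h3 := h1.add h2
  have hsum : Summable (fun n : ℕ => (z/2)^(2*n) / ((n.factorial : ℝ))^2) :=
    Summable.of_nonneg_of_le (I0_term_nonneg z) (fun n => I0_term_le ha n) h3.summable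
  have h4 : I0 z ≤ a/2 * Real.cosh z + (1/(2*a)) * (Real.sinh z / z) :=
    hasSum_le (fun n => I0_term_le ha n) hsum.hasSum h3
  have h5 : (1/(2*a)) * (Real.sinh z / z) = a/2 * Real.sinh z := by
    rw [hadef]; field_simp; rw [sq, hss]
  rw [h5, ← mul_add, Real.cosh_add_sinh] at h4
  have : 0 < Real.exp z * a := by positivity
  linarith

lemma pk_nonneg' {t x y : ℝ} (ht : 0 < t) : 0 ≤ pk t x y := by
  have := I0_nonneg' (x*y/t)
  unfold pk; positivity

lemma pk_le {t x y : ℝ} (ht : 0 < t) (hx : 0 < x) (hy : 0 < y) :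
    pk t x y ≤ (Real.sqrt (x*y*t))⁻¹ * Real.exp (-(x-y)^2/(2*t)) := by
  have hz : 0 < x*y/t := by positivity
  have h := I0_le hz
  have e1 : Real.exp (-(x-y)^2/(2*t)) = Real.exp (-(x^2 + y^2)/(2*t)) * Real.exp (x*y/t) := by
    rw [← Real.exp_add]; congr 1; field_simp; ring
  have e2 : (Real.sqrt (x*y*t))⁻¹ = t⁻¹ * (Real.sqrt (x*y/t))⁻¹ := by
    rw [← mul_inv]; congr 1
    rw [show x*y*t = t^2 * (x*y/t) by field_simp, Real.sqrt_mul (by positivity),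
      Real.sqrt_sq ht.le]
  rw [e1, e2]; unfold pk
  calc _ ≤ t⁻¹ * Real.exp (-(x^2 + y^2)/(2*t)) * (Real.exp (x*y/t) * (Real.sqrt (x*y/t))⁻¹) := by
        gcongr
    _ = _ := by ring

lemma p1_le {p₁ : ℝ → ℝ → ℝ → ℝ} {q : ℝ → ℝ → ℝ} (H : BesselHK p₁ q) {t x y : ℝ}
    (ht : 0 < t) (hx : 1 < x) (hy : 1 < y) :
    p₁ t x y ≤ (Real.sqrt (x*y*t))⁻¹ * Real.exp (-(x-y)^2/(2*t)) := by
  have h1 := H.hunt ht hx hy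
  have h2 : 0 ≤ ∫ u in Set.Ioo 0 t, q x u * pk (t-u) 1 y :=
    setIntegral_nonneg measurableSet_Ioo fun u hu =>
      mul_nonneg (H.q_nonneg hx hu.1) (pk_nonneg' (sub_pos.2 hu.2))
  have h3 := pk_le ht (by linarith : 0 < x) (by linarith : 0 < y)
  linarith

lemma ac_le {p₁ : ℝ → ℝ → ℝ → ℝ} {q : ℝ → ℝ → ℝ} (H : BesselHK p₁ q) {t x y : ℝ}
    (ht : 0 < t) (hx : 1 < x) (hy : 1 < y) :
    p₁ t x y ≤ Real.exp (t/8) * (2*((x-1)*(y-1)/t)) *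
      ((Real.sqrt (x*y*t))⁻¹ * Real.exp (-(x-y)^2/(2*t))) := by
  have h := (H.ac ht hx hy).2
  have hxy : 0 < x*y := by positivity
  have e1 : Real.exp (-(x+y-2)^2/(2*t))
      = Real.exp (-(x-y)^2/(2*t)) * Real.exp (-(2*((x-1)*(y-1)/t))) := by
    rw [← Real.exp_add]; congr 1; field_simp; ring
  have e2 : 1 - Real.exp (-(2*((x-1)*(y-1)/t))) ≤ 2*((x-1)*(y-1)/t) := by
    have := Real.add_one_le_exp (-(2*((x-1)*(y-1)/t))); linarith
  have e3 : (2*Real.pi*t)^(-(1:ℝ)/2) ≤ (Real.sqrt t)⁻¹ := by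
    rw [show -(1:ℝ)/2 = -(1/2) by ring, Real.rpow_neg (by positivity), ← Real.sqrt_eq_rpow]
    gcongr
    have := Real.pi_gt_three
    nlinarith
  have e4 : Real.sqrt (x*y) * (x*y)⁻¹ = (Real.sqrt (x*y))⁻¹ := by
    have := Real.mul_self_sqrt hxy.le
    have h0 := Real.sqrt_pos.2 hxy
    field_simp; rw [sq, this]
  have hA : 0 ≤ 2*((x-1)*(y-1)/t) := by
    have : 0 < x-1 := by linarith
    have : 0 < y-1 := by linarith
    positivity
  calc _ ≤ _ := h
    _ = Real.exp (t/8) * (2*Real.pi*t)^(-(1:ℝ)/2) * (Real.sqrt (x*y) * (x*y)⁻¹)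
        * Real.exp (-(x-y)^2/(2*t)) * (1 - Real.exp (-(2*((x-1)*(y-1)/t)))) := by
        unfold hker; rw [e1]; ring
    _ ≤ Real.exp (t/8) * (Real.sqrt t)⁻¹ * (Real.sqrt (x*y) * (x*y)⁻¹)
        * Real.exp (-(x-y)^2/(2*t)) * (2*((x-1)*(y-1)/t)) := by
        have e5 : 0 ≤ 1 - Real.exp (-(2*((x-1)*(y-1)/t))) :=
          sub_nonneg.2 (Real.exp_le_one_iff.2 (by linarith))
        gcongr
    _ = _ := by
        rw [e4, Real.sqrt_mul hxy.le, mul_inv]; ring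

lemma gauss_pt {w m : ℝ} (hm : 0 ≤ m) :
    w * Real.exp (-(w-m)^2/2) ≤ (m+1) * Real.exp (-(1/4) * (w-m)^2) := by
  have h1 := Real.add_one_le_exp ((w-m)^2/4)
  have h0 : 1 ≤ Real.exp ((w-m)^2/4) := Real.one_le_exp (by positivity)
  have h2 : w ≤ (m+1) * Real.exp ((w-m)^2/4) := by
    nlinarith [sq_nonneg (w-m-2), mul_nonneg hm (sub_nonneg.2 h0)]
  calc _ ≤ (m+1) * Real.exp ((w-m)^2/4) * Real.exp (-(w-m)^2/2) := by gcongr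
    _ = _ := by rw [mul_assoc, ← Real.exp_add]; congr 2; ring

lemma gauss_int (m : ℝ) : Integrable (fun w : ℝ => Real.exp (-(1/4) * (w-m)^2)) :=
  (integrable_exp_neg_mul_sq (by norm_num : (0:ℝ) < 1/4)).comp_sub_right m

lemma gauss_val (m : ℝ) : ∫ w in Set.Ioi (1:ℝ), Real.exp (-(1/4) * (w-m)^2) ≤ 4 := by
  have h1 : ∫ w in Set.Ioi (1:ℝ), Real.exp (-(1/4) * (w-m)^2)
      ≤ ∫ w : ℝ, Real.exp (-(1/4) * (w-m)^2) :=
    setIntegral_le_integral (gauss_int m) (Filter.Eventually.of_forall fun w => (Real.exp_pos _).le)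
  have h2 := integral_sub_right_eq_self (μ := volume) (fun w : ℝ => Real.exp (-(1/4) * w^2)) m
  rw [h2, integral_gaussian] at h1
  refine h1.trans ?_
  rw [Real.sqrt_le_left (by norm_num)]
  have := Real.pi_le_four
  linarith

lemma key {p₁ : ℝ → ℝ → ℝ → ℝ} {q : ℝ → ℝ → ℝ} (H : BesselHK p₁ q) {t x y : ℝ}
    (ht : 16 < t) (hx : 1 < x) (hx2 : x < 2) (hy : 1 < y) (hxy : t ≤ x*y) :
    p₁ t x y ≤ 1000 * ((x-1)*(y-1)/t) *
      ((Real.sqrt (x*y*t))⁻¹ * Real.exp (-(x-y)^2/(2*t))) := by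
  have hyt : t ≤ 2*y := by nlinarith
  have ht0 : 0 < t := by linarith
  have ht1 : 0 < t-1 := by linarith
  have hx0 : 0 < x-1 := by linarith
  have hck := H.ck (t := 1) (s := t-1) (x := x) (y := y) one_pos ht1 hx hy
  rw [show 1 + (t-1) = t by ring] at hck
  set m := x + (y-x)/t with hmdef
  have hm : 0 ≤ m := by
    have : m = (x*(t-1) + y)/t := by rw [hmdef]; field_simp; ring
    rw [this]; positivity
  set D := 4 * (x-1) * (Real.sqrt (y*(t-1)))⁻¹ * Real.exp (-(x-y)^2/(2*t)) * (m+1) with hD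
  have hbound : ∀ w ∈ Set.Ioi (1:ℝ), p₁ 1 x w * p₁ (t-1) w y * w
      ≤ D * Real.exp (-(1/4) * (w-m)^2) := by
    intro w hw
    have hw : 1 < w := hw
    have b1 := ac_le H one_pos hx hw
    have b2 := p1_le H ht1 hw hy
    have n2 := H.p₁_nonneg ht1 hw hy
    have he : Real.exp (1/8) ≤ 2 := by
      have := Real.exp_one_lt_d9
      have h3 := Real.exp_le_exp.2 (by norm_num : (1/8:ℝ) ≤ 1/2)
      have h4 : Real.exp (1/2) * Real.exp (1/2) = Real.exp 1 := by
        rw [← Real.exp_add]; norm_num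
      nlinarith [Real.exp_pos (1/2)]
    have hw0 : 0 < Real.sqrt w := Real.sqrt_pos.2 (by linarith)
    have hww : Real.sqrt w * Real.sqrt w = w := Real.mul_self_sqrt (by linarith)
    have b1' : p₁ 1 x w ≤ 4 * (x-1) * Real.sqrt w * Real.exp (-(x-w)^2/2) := by
      refine b1.trans ?_
      have hs : (Real.sqrt (x*w*1))⁻¹ ≤ (Real.sqrt w)⁻¹ := by
        gcongr; nlinarith
      have hE : Real.exp (-(x-w)^2/(2*1)) = Real.exp (-(x-w)^2/2) := by norm_num
      rw [hE]
      have hw1 : 0 ≤ w - 1 := by linarith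
      calc _ ≤ 2 * (2*((x-1)*w/1)) * ((Real.sqrt w)⁻¹ * Real.exp (-(x-w)^2/2)) := by
            gcongr; linarith
        _ = 4 * (x-1) * (w*(Real.sqrt w)⁻¹) * Real.exp (-(x-w)^2/2) := by ring
        _ = _ := by
            congr 2; field_simp; rw [sq, hww]
    have hexp : Real.exp (-(x-w)^2/2) * Real.exp (-(w-y)^2/(2*(t-1)))
        ≤ Real.exp (-(x-y)^2/(2*t)) * Real.exp (-(w-m)^2/2) := by
      rw [← Real.exp_add, ← Real.exp_add, Real.exp_le_exp]
      have : -(x-w)^2/2 + -(w-y)^2/(2*(t-1)) =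
          -(x-y)^2/(2*t) + -(w-m)^2/2 - (w-m)^2/(2*(t-1)) := by
        rw [hmdef]; field_simp; ring
      rw [this]
      have : 0 ≤ (w-m)^2/(2*(t-1)) := by positivity
      linarith
    have hsq : (Real.sqrt (w*y*(t-1)))⁻¹ = (Real.sqrt w)⁻¹ * (Real.sqrt (y*(t-1)))⁻¹ := by
      rw [mul_assoc, Real.sqrt_mul (by linarith), mul_inv]
    rw [hsq] at b2
    calc _ ≤ (4 * (x-1) * Real.sqrt w * Real.exp (-(x-w)^2/2)) *
          ((Real.sqrt w)⁻¹ * (Real.sqrt (y*(t-1)))⁻¹ * Real.exp (-(w-y)^2/(2*(t-1)))) * w := by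
          gcongr
      _ = 4 * (x-1) * (Real.sqrt (y*(t-1)))⁻¹ * w *
          (Real.exp (-(x-w)^2/2) * Real.exp (-(w-y)^2/(2*(t-1)))) := by
          field_simp
      _ ≤ 4 * (x-1) * (Real.sqrt (y*(t-1)))⁻¹ * w *
          (Real.exp (-(x-y)^2/(2*t)) * Real.exp (-(w-m)^2/2)) := by gcongr
      _ = 4 * (x-1) * (Real.sqrt (y*(t-1)))⁻¹ * Real.exp (-(x-y)^2/(2*t)) *
          (w * Real.exp (-(w-m)^2/2)) := by ring
      _ ≤ 4 * (x-1) * (Real.sqrt (y*(t-1)))⁻¹ * Real.exp (-(x-y)^2/(2*t)) *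
          ((m+1) * Real.exp (-(1/4) * (w-m)^2)) := by
          exact mul_le_mul_of_nonneg_left (gauss_pt hm) (by positivity)
      _ = _ := by rw [hD]; ring
  have hD0 : 0 ≤ D := by rw [hD]; positivity
  have hint : p₁ t x y ≤ D * 4 := by
    rw [hck]
    calc _ ≤ ∫ w in Set.Ioi (1:ℝ), D * Real.exp (-(1/4) * (w-m)^2) := by
          refine integral_mono_of_nonneg ?_ ((gauss_int m).const_mul D).integrableOn ?_
          · filter_upwards [ae_restrict_mem measurableSet_Ioi] with w hw
            have hw : 1 < w := hw
            have n1 := H.p₁_nonneg one_pos hx hw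
            have n2 := H.p₁_nonneg ht1 hw hy
            have : 0 ≤ w := by linarith
            simp only [Pi.zero_apply]
            positivity
          · filter_upwards [ae_restrict_mem measurableSet_Ioi] with w hw
            exact hbound w hw
      _ = D * ∫ w in Set.Ioi (1:ℝ), Real.exp (-(1/4) * (w-m)^2) := by
          rw [integral_const_mul]
      _ ≤ _ := by gcongr; exact gauss_val m
  refine hint.trans ?_
  have hy8 : 8 < y := by linarith
  have hm1 : m + 1 ≤ 14 * ((y-1)/t) := by
    rw [hmdef]
    have h1 : (y-x)/t ≤ (y-1)/t := by gcongr
    have h2 : 3/13 ≤ (y-1)/t := by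
      rw [div_le_div_iff₀ (by norm_num) ht0]; linarith
    linarith
  have hsq : (Real.sqrt (y*(t-1)))⁻¹ ≤ 2 * (Real.sqrt (x*y*t))⁻¹ := by
    have h4 : Real.sqrt (x*y*t) ≤ 2 * Real.sqrt (y*(t-1)) := by
      rw [show (2:ℝ) = Real.sqrt (2^2) by rw [Real.sqrt_sq]; norm_num,
        ← Real.sqrt_mul (by norm_num)]
      apply Real.sqrt_le_sqrt
      have : x*t ≤ 2^2*(t-1) := by nlinarith
      nlinarith
    have p1 : 0 < Real.sqrt (x*y*t) := Real.sqrt_pos.2 (by positivity)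
    have p2 : 0 < Real.sqrt (y*(t-1)) := Real.sqrt_pos.2 (by positivity)
    rw [← div_eq_mul_inv, inv_eq_one_div, div_le_div_iff₀ p2 p1]; linarith
  have hy1 : 0 < y - 1 := by linarith
  calc D * 4 ≤ 4 * (x-1) * (2 * (Real.sqrt (x*y*t))⁻¹) * Real.exp (-(x-y)^2/(2*t)) *
        (14 * ((y-1)/t)) * 4 := by rw [hD]; gcongr
    _ = 448 * ((x-1)*(y-1)/t) *
      ((Real.sqrt (x*y*t))⁻¹ * Real.exp (-(x-y)^2/(2*t))) := by ring
    _ ≤ _ := by gcongr; norm_num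

lemma min_combine {p K A B : ℝ} (h1 : p ≤ B) (h2 : p ≤ K * A * B) (hB : 0 ≤ B) (hA : 0 ≤ A)
    (hK : 1 ≤ K) : p ≤ K * (min 1 A * B) := by
  rcases min_cases 1 A with ⟨h, -⟩ | ⟨h, -⟩ <;> rw [h]
  · nlinarith
  · linarith

lemma large_le {p₁ : ℝ → ℝ → ℝ → ℝ} {q : ℝ → ℝ → ℝ} (H : BesselHK p₁ q) {t x y : ℝ}
    (ht : 16 < t) (hx : 1 < x) (hle : x ≤ y) (hxy : t ≤ x*y) :
    p₁ t x y ≤ 1000 * ((x-1)*(y-1)/t) *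
      ((Real.sqrt (x*y*t))⁻¹ * Real.exp (-(x-y)^2/(2*t))) := by
  have hy : 1 < y := by linarith
  rcases lt_or_ge x 2 with h | h
  · exact key H ht hx h hy hxy
  · have hB : 0 ≤ (Real.sqrt (x*y*t))⁻¹ * Real.exp (-(x-y)^2/(2*t)) := by positivity
    have h1 := p1_le H (by linarith : 0 < t) hx hy
    have h2 : 1 ≤ 1000 * ((x-1)*(y-1)/t) := by
      rw [← mul_div_assoc, le_div_iff₀ (by linarith)]
      nlinarith
    nlinarith

theorem bessel_heat_kernel_upper_bound_large (p₁ : ℝ → ℝ → ℝ → ℝ) (q : ℝ → ℝ → ℝ)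
    (H : BesselHK p₁ q) :
    ∃ C₂ : ℝ, 0 < C₂ ∧ ∀ t x y : ℝ, 0 < t → 1 < x → 1 < y → t ≤ x*y →
      p₁ t x y ≤ C₂ * (min 1 ((x-1)*(y-1)/t) * (Real.sqrt (x*y*t))⁻¹ *
        Real.exp (-(x-y)^2/(2*t))) := by
  refine ⟨max 1000 (2 * Real.exp 2), by positivity, ?_⟩
  intro t x y ht hx hy hxy
  have hA : 0 ≤ (x-1)*(y-1)/t := by
    have : 0 < x-1 := by linarith
    have : 0 < y-1 := by linarith
    positivity
  have hB : 0 ≤ (Real.sqrt (x*y*t))⁻¹ * Real.exp (-(x-y)^2/(2*t)) := by positivity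
  rw [mul_assoc (min 1 ((x-1)*(y-1)/t))]
  refine min_combine (p1_le H ht hx hy) ?_ hB hA
    (le_trans (by norm_num) (le_max_left _ _))
  rcases le_or_gt t 16 with h | h
  · refine (ac_le H ht hx hy).trans ?_
    have h8 : Real.exp (t/8) ≤ Real.exp 2 := Real.exp_le_exp.2 (by linarith)
    calc _ ≤ Real.exp 2 * (2*((x-1)*(y-1)/t)) *
          ((Real.sqrt (x*y*t))⁻¹ * Real.exp (-(x-y)^2/(2*t))) := by gcongr
      _ = (2 * Real.exp 2) * ((x-1)*(y-1)/t) *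
          ((Real.sqrt (x*y*t))⁻¹ * Real.exp (-(x-y)^2/(2*t))) := by ring
      _ ≤ _ := by gcongr; exact le_max_right _ _
  · have hl : p₁ t x y ≤ 1000 * ((x-1)*(y-1)/t) *
        ((Real.sqrt (x*y*t))⁻¹ * Real.exp (-(x-y)^2/(2*t))) := by
      rcases le_total x y with hle | hle
      · exact large_le H h hx hle hxy
      · have := large_le H h hy hle (by linarith)
        rw [H.symm ht hx hy]
        rwa [mul_comm (y-1), mul_comm y x, show (y-x)^2 = (x-y)^2 by ring] at this
    refine hl.trans ?_
    gcongr
    exact le_max_left _ _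
end

section
/- Let t, y > 0 satisfy y² ≥ 4t. Then the function x ↦ p(t,x,y) is strictly increasing on the interval (1, y/2): if 1 < x₁ < x₂ < y/2 then p(t,x₁,y) < p(t,x₂,y). -/
open Real MeasureTheory

lemma aux_fac_one (n : ℕ) : (1:ℝ) ≤ (n.factorial : ℝ) := by
  exact_mod_cast Nat.succ_le_of_lt n.factorial_pos

lemma summable_I1aux (u : ℝ) (hu : 0 ≤ u) :
    Summable (fun n : ℕ => u^(2*n+1) / ((n.factorial : ℝ) * ((n+1).factorial : ℝ))) := by
  refine Summable.of_nonneg_of_le (fun n => by positivity) (fun n => ?_)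
    ((Real.summable_pow_div_factorial (u^2)).mul_left u)
  have h1 := aux_fac_one n
  have h2 := aux_fac_one (n+1)
  have : u * ((u^2)^n / (n.factorial:ℝ)) = u^(2*n+1) / (n.factorial : ℝ) := by
    rw [← pow_mul]; ring
  rw [this]
  apply div_le_div_of_nonneg_left (by positivity) (by positivity)
  nlinarith

lemma summable_I0aux (u : ℝ) :
    Summable (fun n : ℕ => u^(2*n) / ((n.factorial : ℝ))^2) := by
  have hn : ∀ n : ℕ, 0 ≤ u^(2*n) := fun n => by rw [pow_mul]; positivity
  refine Summable.of_nonneg_of_le (fun n => div_nonneg (hn n) (by positivity)) (fun n => ?_)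
    (Real.summable_pow_div_factorial (u^2))
  have h1 := aux_fac_one n
  rw [← pow_mul]
  apply div_le_div_of_nonneg_left (hn n) (by positivity)
  nlinarith

lemma dterm_succ (u : ℝ) (n : ℕ) :
    (((2*(n+1) : ℕ):ℝ) * u^(2*(n+1)-1)) / (((n+1).factorial : ℝ))^2
      = 2 * (u^(2*n+1) / ((n.factorial : ℝ) * ((n+1).factorial : ℝ))) := by
  have e : 2*(n+1)-1 = 2*n+1 := by omega
  rw [e, Nat.factorial_succ]
  have h1 := aux_fac_one n
  have : (n.factorial : ℝ) ≠ 0 := by positivity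
  push_cast
  field_simp

lemma hasDerivAt_aux (u : ℝ) (hu : 0 ≤ u) :
    HasDerivAt (fun v : ℝ => ∑' n : ℕ, v^(2*n) / ((n.factorial : ℝ))^2)
      (2 * ∑' n : ℕ, u^(2*n+1) / ((n.factorial : ℝ) * ((n+1).factorial : ℝ))) u := by
  have hs : ∀ w : ℝ, 0 ≤ w → Summable (fun n : ℕ =>
      (((2*n : ℕ):ℝ) * w^(2*n-1)) / ((n.factorial : ℝ))^2) := by
    intro w hw
    rw [← summable_nat_add_iff 1]
    simp_rw [dterm_succ]
    exact (summable_I1aux w hw).mul_left 2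
  have key := hasDerivAt_tsum_of_isPreconnected (hs (u+1) (by linarith))
    (g := fun (n : ℕ) (v : ℝ) => v^(2*n) / ((n.factorial : ℝ))^2)
    (g' := fun (n : ℕ) (v : ℝ) => (((2*n : ℕ):ℝ) * v^(2*n-1)) / ((n.factorial : ℝ))^2)
    (t := Metric.ball 0 (u+1)) (y₀ := 0) (y := u)
    Metric.isOpen_ball (convex_ball _ _).isPreconnected
    (fun n v _ => (hasDerivAt_pow (2*n) v).div_const _)
    (fun n v hv => by
      have hv' : |v| ≤ u+1 := by
        have : |v| < u+1 := by simpa using hv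
        exact this.le
      rw [norm_div, norm_mul, norm_pow]
      simp only [Real.norm_eq_abs, Nat.abs_cast, abs_pow]
      gcongr)
    (by simp; linarith) (summable_I0aux 0) (by simp [abs_of_nonneg hu])
  refine key.congr_deriv ?_
  rw [(hs u hu).tsum_eq_zero_add, ← tsum_mul_left]
  simp only [dterm_succ]
  simp

lemma I0_deriv (z : ℝ) (hz : 0 ≤ z) : HasDerivAt I0 (I1 z) z := by
  have h := (hasDerivAt_aux (z/2) (by linarith)).comp z ((hasDerivAt_id z).div_const 2)
  refine HasDerivAt.congr_deriv h ?_
  simp only [I1]; ring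

lemma I0_lt (z c : ℝ) (hz : 0 < z) (hc : 1 ≤ c) (hcz : 1 ≤ c * (z/2)) :
    I0 z < 2 * c * I1 z := by
  unfold I0 I1
  set u := z/2 with hu
  have hu0 : 0 < u := by positivity
  have s0 := summable_I0aux u
  have s1 := summable_I1aux u hu0.le
  have s0' := (summable_nat_add_iff 1).2 s0
  have s1' := (summable_nat_add_iff 1).2 s1
  have e0 := s0.tsum_eq_zero_add
  have e1 := s1.tsum_eq_zero_add
  have hlt : ∀ n : ℕ, u^(2*(n+1)) / (((n+1).factorial : ℝ))^2 <
      c * (u^(2*n+1) / ((n.factorial : ℝ) * ((n+1).factorial : ℝ))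
        + u^(2*(n+1)+1) / (((n+1).factorial : ℝ) * ((n+1+1).factorial : ℝ))) := by
    intro n
    have hf := aux_fac_one n
    have hf0 : (0:ℝ) < n.factorial := by positivity
    have hp : (0:ℝ) < u^(2*n+1) / (((n:ℝ)+1) * n.factorial)^2 := by positivity
    have a1 : u^(2*(n+1)) / (((n+1).factorial : ℝ))^2
        = u^(2*n+1) / (((n:ℝ)+1) * n.factorial)^2 * u := by
      rw [Nat.factorial_succ]; push_cast; ring
    have a2 : u^(2*n+1) / ((n.factorial : ℝ) * ((n+1).factorial : ℝ))
        + u^(2*(n+1)+1) / (((n+1).factorial : ℝ) * ((n+1+1).factorial : ℝ))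
        = u^(2*n+1) / (((n:ℝ)+1) * n.factorial)^2 * (((n:ℝ)+1) + u^2/((n:ℝ)+2)) := by
      rw [Nat.factorial_succ (n+1), Nat.factorial_succ n]; push_cast; field_simp; ring
    rw [a1, a2]
    have hn : (0:ℝ) ≤ n := n.cast_nonneg
    have b : u < ((n:ℝ)+1) + u^2/((n:ℝ)+2) := by
      have : ((n:ℝ)+1) + u^2/((n:ℝ)+2) - u
        = (((n:ℝ)+1)*((n:ℝ)+2) + u^2 - u*((n:ℝ)+2)) / ((n:ℝ)+2) := by
        field_simp
      have h2 : 0 < (((n:ℝ)+1)*((n:ℝ)+2) + u^2 - u*((n:ℝ)+2)) / ((n:ℝ)+2) := by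
        apply div_pos _ (by positivity)
        nlinarith [sq_nonneg (u - ((n:ℝ)+2)/2)]
      linarith
    have d := mul_lt_mul_of_pos_left b hp
    have hpos : 0 < u^(2*n+1) / (((n:ℝ)+1) * n.factorial)^2 * (((n:ℝ)+1) + u^2/((n:ℝ)+2)) := by
      positivity
    nlinarith
  have h := Summable.tsum_lt_tsum (i := 0) (fun n => (hlt n).le) (hlt 0) s0'
    ((s1.add s1').mul_left c)
  rw [tsum_mul_left, s1.tsum_add s1'] at h
  simp at e0 e1 h
  nlinarith

theorem bessel_heat_kernel_monotone :
    ∀ t y : ℝ, 0 < t → 0 < y → 4*t ≤ y^2 →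
      ∀ x₁ x₂ : ℝ, 1 < x₁ → x₁ < x₂ → x₂ < y/2 → pk t x₁ y < pk t x₂ y := by
  intro t y ht hy hty x₁ x₂ h1 h12 h2
  have hd : ∀ x : ℝ, 0 < x → HasDerivAt (fun x => pk t x y)
      (t⁻¹ * Real.exp (-(x^2 + y^2)/(2*t)) * (t⁻¹ * (y * I1 (x*y/t) - x * I0 (x*y/t)))) x := by
    intro x hx
    have g1 : HasDerivAt (fun x : ℝ => -(x^2 + y^2)/(2*t)) (-(2*x)/(2*t)) x := by
      have := (((hasDerivAt_pow 2 x).add_const (y^2)).neg).div_const (2*t)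
      simpa using this
    have g2 : HasDerivAt (fun x : ℝ => x*y/t) (y/t) x := by
      simpa using ((hasDerivAt_id x).mul_const y).div_const t
    have g3 := (I0_deriv (x*y/t) (by positivity)).comp x g2
    have g4 := (g1.exp.const_mul t⁻¹).mul g3
    unfold pk
    refine HasDerivAt.congr_deriv g4 ?_
    simp only [Function.comp]
    field_simp
    ring
  have hmono : StrictMonoOn (fun x => pk t x y) (Set.Icc x₁ x₂) := by
    apply strictMonoOn_of_deriv_pos (convex_Icc _ _)
    · intro x hx
      exact (hd x (by linarith [hx.1])).continuousAt.continuousWithinAt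
    · intro x hx
      rw [interior_Icc] at hx
      have hx0 : 0 < x := by linarith [hx.1]
      have hxy : x < y/2 := by linarith [hx.2]
      rw [(hd x hx0).deriv]
      have k := I0_lt (x*y/t) (y/(2*x)) (by positivity)
        (by rw [le_div_iff₀ (by positivity)]; linarith)
        (by
          have : y/(2*x) * (x*y/t/2) = y^2/(4*t) := by field_simp; ring
          rw [this, le_div_iff₀ (by positivity)]; linarith)
      have k2 := mul_lt_mul_of_pos_left k hx0
      have e : x * (2 * (y/(2*x)) * I1 (x*y/t)) = y * I1 (x*y/t) := by field_simp
      rw [e] at k2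
      have : 0 < y * I1 (x*y/t) - x * I0 (x*y/t) := by linarith
      positivity
  exact hmono (Set.left_mem_Icc.2 h12.le) (Set.right_mem_Icc.2 h12.le) h12
end

section
/- For every z > 0 one has z/(z+2) ≤ I₁(z)/I₀(z) ≤ 2z/(2z+1). -/
open Real MeasureTheory

lemma aux_summ (c : ℕ → ℝ) (hc : ∀ n, |c n| ≤ 1 / (n.factorial : ℝ)) (x : ℝ) :
    Summable (fun n => c n * x ^ n) := by
  refine Summable.of_norm_bounded (Real.summable_pow_div_factorial |x|) (fun n => ?_)
  rw [Real.norm_eq_abs, abs_mul, abs_pow]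
  calc |c n| * |x| ^ n ≤ 1 / (n.factorial : ℝ) * |x| ^ n := by gcongr; exact hc n
    _ = _ := by ring

lemma aux_bound (c : ℕ → ℝ) (hc : ∀ n, |c n| ≤ 1 / (n.factorial : ℝ)) (R y : ℝ)
    (h : |y| ≤ R) (n : ℕ) :
    ‖c n * (n * y ^ (n - 1))‖ ≤ n * R ^ (n - 1) / (n.factorial : ℝ) := by
  rw [Real.norm_eq_abs, abs_mul, abs_mul, abs_pow, Nat.abs_cast]
  calc |c n| * (n * |y| ^ (n - 1)) ≤ 1 / (n.factorial : ℝ) * (n * R ^ (n - 1)) := by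
        gcongr; exact hc n
    _ = _ := by ring

lemma aux_usumm (R : ℝ) :
    Summable (fun n : ℕ => n * R ^ (n - 1) / (n.factorial : ℝ)) := by
  rw [← summable_nat_add_iff 1]
  refine (Real.summable_pow_div_factorial R).congr (fun n => ?_)
  rw [Nat.factorial_succ]
  have := Nat.factorial_pos n
  push_cast
  field_simp
  try simp

lemma aux_deriv (c : ℕ → ℝ) (hc : ∀ n, |c n| ≤ 1 / (n.factorial : ℝ)) (x : ℝ) :
    HasDerivAt (fun y => ∑' n, c n * y ^ n) (∑' n : ℕ, c n * (n * x ^ (n - 1))) x := by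
  refine hasDerivAt_tsum_of_isPreconnected (t := Metric.ball 0 (|x| + 1))
    (aux_usumm (|x| + 1)) Metric.isOpen_ball
    (convex_ball _ _).isPreconnected (g := fun n y => c n * y ^ n)
    (g' := fun n y => c n * (n * y ^ (n - 1))) (fun n y _ => ?_) (fun n y hy => ?_)
    (y₀ := x) ?_ (aux_summ c hc x) ?_
  · exact (hasDerivAt_pow n y).const_mul (c n)
  · refine aux_bound c hc _ _ ?_ n
    simp at hy
    exact hy.le
  · simp
  · simp

noncomputable def c0 (n : ℕ) : ℝ := 1 / (n.factorial : ℝ) ^ 2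
noncomputable def c1 (n : ℕ) : ℝ := 1 / ((n.factorial : ℝ) * ((n + 1).factorial : ℝ))
noncomputable def A0 (w : ℝ) : ℝ := ∑' n, c0 n * w ^ n
noncomputable def A1 (w : ℝ) : ℝ := ∑' n, c1 n * w ^ n

lemma aux_fac (n : ℕ) : (1 : ℝ) ≤ (n.factorial : ℝ) := by
  exact_mod_cast Nat.factorial_pos n

lemma hc0 (n : ℕ) : |c0 n| ≤ 1 / (n.factorial : ℝ) := by
  have h := aux_fac n
  rw [c0, abs_of_nonneg (by positivity)]
  apply one_div_le_one_div_of_le (by positivity)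
  nlinarith

lemma hc1 (n : ℕ) : |c1 n| ≤ 1 / (n.factorial : ℝ) := by
  have h := aux_fac n
  have h' := aux_fac (n + 1)
  rw [c1, abs_of_nonneg (by positivity)]
  apply one_div_le_one_div_of_le (by positivity)
  nlinarith

lemma A0_deriv (w : ℝ) : HasDerivAt A0 (A1 w) w := by
  have h : HasDerivAt A0 _ w := aux_deriv c0 hc0 w
  convert h using 1
  have hs : Summable (fun n : ℕ => c0 n * (n * w ^ (n - 1))) :=
    Summable.of_norm_bounded (aux_usumm |w|) (aux_bound c0 hc0 _ _ le_rfl)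
  rw [hs.tsum_eq_zero_add, A1]
  simp only [Nat.cast_zero, zero_mul, mul_zero, zero_add]
  refine tsum_congr (fun n => ?_)
  have := aux_fac n
  rw [c0, c1, Nat.factorial_succ]
  simp only [Nat.add_sub_cancel]
  push_cast
  field_simp

lemma A1_deriv (w : ℝ) : ∃ d, HasDerivAt A1 d w ∧ w * d = A0 w - A1 w := by
  refine ⟨_, aux_deriv c1 hc1 w, ?_⟩
  rw [← tsum_mul_left, A0, A1, ← (aux_summ c0 hc0 w).tsum_sub (aux_summ c1 hc1 w)]
  refine tsum_congr (fun n => ?_)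
  have := aux_fac n
  rcases n with _ | n
  · simp [c0, c1]
  · rw [c0, c1, Nat.factorial_succ (n + 1)]
    simp only [Nat.add_sub_cancel]
    push_cast
    field_simp
    ring

lemma I0_eq (z : ℝ) : I0 z = A0 (z ^ 2 / 4) := by
  refine tsum_congr (fun n => ?_)
  rw [c0, pow_mul]; ring

lemma I1_eq (z : ℝ) : I1 z = z / 2 * A1 (z ^ 2 / 4) := by
  rw [I1, A1, ← tsum_mul_left]
  refine tsum_congr (fun n => ?_)
  rw [c1, pow_succ, pow_mul, show (z / 2) ^ 2 = z ^ 2 / 4 by ring]; ring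

lemma A1_nonneg (w : ℝ) (hw : 0 ≤ w) : 0 ≤ A1 w :=
  tsum_nonneg (fun n => by rw [c1]; positivity)

lemma A0_pos (w : ℝ) (hw : 0 ≤ w) : 0 < A0 w := by
  refine (aux_summ c0 hc0 w).tsum_pos (fun n => ?_) 0 ?_
  · rw [c0]; positivity
  · simp [c0]

/-- `P = 2 I0 - (2 z + 1) I1 / z`. -/
noncomputable def PP (z : ℝ) : ℝ := 2 * A0 (z ^ 2 / 4) - (2 * z + 1) * (A1 (z ^ 2 / 4) / 2)

lemma PP_deriv (z : ℝ) : ∃ d, HasDerivAt PP d z ∧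
    z * PP z + PP z / 2 + z * d = 3 / 4 * A1 (z ^ 2 / 4) := by
  obtain ⟨d, hd, hd'⟩ := A1_deriv (z ^ 2 / 4)
  have hq : HasDerivAt (fun z : ℝ => z ^ 2 / 4) (z / 2) z := by
    have := (hasDerivAt_pow 2 z).div_const 4
    have e : ((2 : ℕ) : ℝ) * z ^ (2 - 1) / 4 = z / 2 := by
      norm_num
      ring
    rw [e] at this
    exact this
  have h0 := (A0_deriv (z ^ 2 / 4)).comp z hq
  have h1 := hd.comp z hq
  have hl : HasDerivAt (fun z : ℝ => 2 * z + 1) 2 z := by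
    simpa using ((hasDerivAt_id z).const_mul 2).add_const 1
  refine ⟨_, (h0.const_mul 2).sub (hl.mul (h1.div_const 2)), ?_⟩
  simp only [PP]
  linear_combination (-(2 * z + 1)) * hd'

lemma PP_nonneg (z : ℝ) (hz : 0 < z) : 0 ≤ PP z := by
  have hcont : Continuous PP := by
    rw [continuous_iff_continuousAt]
    intro x
    obtain ⟨d, hd, _⟩ := PP_deriv x
    exact hd.continuousAt
  have key : ∀ x : ℝ, 0 < x → ∃ e, HasDerivAt (fun y => Real.exp y * (√y * PP y)) e x ∧ 0 ≤ e := by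
    intro x hx
    obtain ⟨d, hd, hd'⟩ := PP_deriv x
    refine ⟨_, (Real.hasDerivAt_exp x).mul ((Real.hasDerivAt_sqrt hx.ne').mul hd), ?_⟩
    have hs : 0 < √x := Real.sqrt_pos.2 hx
    have hsq : √x * √x = x := Real.mul_self_sqrt hx.le
    have hA := A1_nonneg (x ^ 2 / 4) (by positivity)
    have : Real.exp x * (√x * PP x) + Real.exp x * (1 / (2 * √x) * PP x + √x * d)
        = Real.exp x / √x * (3 / 4 * A1 (x ^ 2 / 4)) := by
      rw [← hd']
      field_simp
      rw [Real.sq_sqrt hx.le]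
      ring
    rw [this]
    positivity
  have hm : MonotoneOn (fun y => Real.exp y * (√y * PP y)) (Set.Ici 0) := by
    apply monotoneOn_of_deriv_nonneg (convex_Ici 0)
    · fun_prop
    · intro x hx
      rw [interior_Ici] at hx
      obtain ⟨e, he, _⟩ := key x hx
      exact he.differentiableAt.differentiableWithinAt
    · intro x hx
      rw [interior_Ici] at hx
      obtain ⟨e, he, he'⟩ := key x hx
      rw [he.deriv]; exact he'
  have h := hm (Set.mem_Ici.2 le_rfl) (Set.mem_Ici.2 hz.le) hz.le
  simp only [Real.sqrt_zero, zero_mul, mul_zero] at h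
  have hs : 0 < √z := Real.sqrt_pos.2 hz
  have he := Real.exp_pos z
  rw [← mul_assoc] at h
  exact nonneg_of_mul_nonneg_right h (by positivity)

/-- `x I0 - I1 ≤ x I1` at `z = 2 x`, i.e. `I2 ≤ I1`. -/
lemma lower (x : ℝ) (hx : 0 < x) : A0 (x ^ 2) - A1 (x ^ 2) ≤ x * A1 (x ^ 2) := by
  have s0 := aux_summ c0 hc0 (x ^ 2)
  have s1 := aux_summ c1 hc1 (x ^ 2)
  have s1' := (summable_nat_add_iff 1).2 s1
  have e1 : A0 (x ^ 2) - A1 (x ^ 2) =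
      ∑' n, (c0 (n + 1) * (x ^ 2) ^ (n + 1) - c1 (n + 1) * (x ^ 2) ^ (n + 1)) := by
    rw [A0, A1, ← s0.tsum_sub s1, (s0.sub s1).tsum_eq_zero_add]
    simp [c0, c1]
  have e2 : ∑' n, x / 2 * (c1 n * (x ^ 2) ^ n + c1 (n + 1) * (x ^ 2) ^ (n + 1)) ≤
      x * A1 (x ^ 2) := by
    rw [tsum_mul_left, s1.tsum_add s1']
    have h := s1.tsum_eq_zero_add
    have hp : 0 ≤ c1 0 * (x ^ 2) ^ 0 := by rw [c1]; positivity
    rw [A1]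
    nlinarith
  rw [e1]
  refine le_trans (Summable.tsum_le_tsum (fun n => ?_) ?_ ?_) e2
  · have hf := aux_fac n
    have hn : (0 : ℝ) ≤ n := Nat.cast_nonneg n
    rw [c0, c1, c1, Nat.factorial_succ (n + 1), Nat.factorial_succ n, pow_succ (x ^ 2) n]
    push_cast
    have hp : 0 < (x ^ 2) ^ n := by positivity
    have : x / 2 * (1 / ((n.factorial : ℝ) * ((n + 1) * n.factorial)) * (x ^ 2) ^ n
        + 1 / (((n + 1) * n.factorial) * ((n + 1 + 1) * ((n + 1) * (n.factorial : ℝ))))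
          * ((x ^ 2) ^ n * x ^ 2))
        - (1 / ((n + 1) * (n.factorial : ℝ)) ^ 2 * ((x ^ 2) ^ n * x ^ 2)
          - 1 / (((n + 1) * n.factorial) * ((n + 1 + 1) * ((n + 1) * (n.factorial : ℝ))))
          * ((x ^ 2) ^ n * x ^ 2))
        = x * (x ^ 2) ^ n * ((n + 1) * (n + 1 + 1) + x ^ 2 - 2 * (n + 1) * x) /
          (2 * (n.factorial : ℝ) ^ 2 * (n + 1) ^ 2 * (n + 1 + 1)) := by
      field_simp
      ring
    have h2 : 0 ≤ ((n:ℝ) + 1) * (n + 1 + 1) + x ^ 2 - 2 * (n + 1) * x := by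
      nlinarith [sq_nonneg (x - (n + 1))]
    rw [← sub_nonneg, this]
    positivity
  · exact (summable_nat_add_iff 1).2 (s0.sub s1)
  · exact (s1.add s1').mul_left _

theorem besselI1_div_I0_bounds :
    ∀ z : ℝ, 0 < z → z/(z+2) ≤ I1 z / I0 z ∧ I1 z / I0 z ≤ 2*z/(2*z+1) := by
  intro z hz
  have h0 := A0_pos (z ^ 2 / 4) (by positivity)
  have hl := lower (z / 2) (by positivity)
  have hu := PP_nonneg z hz
  rw [show (z / 2) ^ 2 = z ^ 2 / 4 by ring] at hl
  rw [PP] at hu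
  rw [I0_eq, I1_eq]
  constructor
  · rw [div_le_div_iff₀ (by positivity) h0]
    nlinarith [mul_le_mul_of_nonneg_left hl hz.le]
  · rw [div_le_div_iff₀ h0 (by positivity)]
    nlinarith [mul_nonneg hz.le hu]
end

section
/- There exist constants 0 < c ≤ C such that for every z ≥ 1, c·e^{z}/√z ≤ I₀(z) ≤ C·e^{z}/√z. Consequently, there exist constants 0 < c' ≤ C' such that for all t, x, y > 0 with xy ≥ t, c'·(xyt)^{−1/2}·exp(−(x−y)²/(2t)) ≤ p(t,x,y) ≤ C'·(xyt)^{−1/2}·exp(−(x−y)²/(2t)). -/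
open Real MeasureTheory

noncomputable def bcoef (n : ℕ) : ℝ := ((2*n).factorial : ℝ) / (4^n * (n.factorial : ℝ)^2)

lemma bcoef_pos (n : ℕ) : 0 < bcoef n := by unfold bcoef; positivity

lemma bcoef_succ (n : ℕ) : bcoef (n+1) = bcoef n * ((2*n+1)/(2*n+2)) := by
  have h1 : ((n.factorial : ℕ) : ℝ) ≠ 0 := by positivity
  have h2 : (n : ℝ) + 1 ≠ 0 := by positivity
  unfold bcoef
  rw [show 2*(n+1) = (2*n+1)+1 by ring, Nat.factorial_succ, Nat.factorial_succ, Nat.factorial_succ]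
  push_cast
  field_simp
  ring

lemma bcoef_upper (n : ℕ) : bcoef n ^ 2 * (2*n+1) ≤ 1 := by
  induction n with
  | zero => simp [bcoef]
  | succ k ih =>
    refine le_trans ?_ ih
    rw [bcoef_succ, mul_pow, mul_assoc]
    refine mul_le_mul_of_nonneg_left ?_ (sq_nonneg _)
    push_cast
    rw [div_pow, div_mul_eq_mul_div, div_le_iff₀ (by positivity)]
    have : (0:ℝ) ≤ k := by positivity
    nlinarith

lemma bcoef_lower (n : ℕ) : 1 ≤ bcoef n ^ 2 * (4*n+1) := by
  induction n with
  | zero => simp [bcoef]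
  | succ k ih =>
    refine le_trans ih ?_
    rw [bcoef_succ, mul_pow, mul_assoc]
    refine mul_le_mul_of_nonneg_left ?_ (sq_nonneg _)
    push_cast
    rw [div_pow, div_mul_eq_mul_div, le_div_iff₀ (by positivity)]
    nlinarith

lemma term_eq (z : ℝ) (n : ℕ) :
    (z/2)^(2*n) / ((n.factorial : ℝ))^2 = z^(2*n) / ((2*n).factorial : ℝ) * bcoef n := by
  have h1 : ((n.factorial : ℕ) : ℝ) ≠ 0 := by positivity
  have h2 : (((2*n).factorial : ℕ) : ℝ) ≠ 0 := by positivity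
  unfold bcoef
  rw [div_pow, pow_mul 2 2 n]
  norm_num
  field_simp

lemma bcoef_le (n : ℕ) (w : ℝ) (hw : 0 < w) :
    bcoef n ≤ (w / (2*n+1) + 1 / w) / 2 := by
  have hs : (0:ℝ) < 2*n+1 := by positivity
  refine (sq_le_sq₀ (bcoef_pos n).le (by positivity)).1 ?_
  have h := bcoef_upper n
  rw [← le_div_iff₀ hs] at h
  refine h.trans ?_
  have e : ((w / (2*n+1) + 1 / w) / 2)^2 = ((w / (2*n+1) - 1 / w) / 2)^2 + 1/(2*n+1) := by
    field_simp
    ring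
  rw [e]
  nlinarith [sq_nonneg ((w / (2*n+1) - 1 / w) / 2)]

lemma le_bcoef (n : ℕ) (r : ℝ) (hr : 0 < r) :
    (3/2 - (4*n+1) / (2*r^2)) / r ≤ bcoef n := by
  have hs : (0:ℝ) < 4*n+1 := by positivity
  have hb := bcoef_pos n
  have h := bcoef_lower n
  set u := Real.sqrt (4*n+1) with hu
  have hu0 : 0 < u := Real.sqrt_pos.2 hs
  have hu2 : u^2 = 4*n+1 := Real.sq_sqrt hs.le
  rw [← hu2] at h ⊢
  have h1 : 1 ≤ bcoef n * u := by
    rw [← mul_pow] at h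
    by_contra hc
    push Not at hc
    nlinarith [mul_pos hb hu0]
  have h2 : 1/u ≤ bcoef n := by rwa [div_le_iff₀ hu0]
  refine le_trans ?_ h2
  have e : 1/u - (3/2 - u^2 / (2*r^2)) / r = (r-u)^2*(2*r+u) / (2*r^3*u) := by
    field_simp
    ring
  have : 0 ≤ (r-u)^2*(2*r+u) / (2*r^3*u) := by positivity
  linarith

lemma upper_hasSum (z w : ℝ) (hz : 0 < z) :
    HasSum (fun n : ℕ => z^(2*n) / ((2*n).factorial : ℝ) * ((w / (2*n+1) + 1 / w) / 2))
      ((w * (Real.sinh z / z) + Real.cosh z / w) / 2) := by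
  have h := ((((Real.hasSum_sinh z).div_const z).mul_left w).add
    ((Real.hasSum_cosh z).div_const w)).div_const 2
  refine (congrArg (fun f => HasSum f _) (funext fun n => ?_)).mpr h
  rw [Nat.factorial_succ, pow_succ]
  have h2 : (((2*n).factorial : ℕ) : ℝ) ≠ 0 := by positivity
  push_cast
  have h3 : (2*(n:ℝ)+1) ≠ 0 := by positivity
  field_simp

lemma lin_hasSum (z : ℝ) :
    HasSum (fun n : ℕ => z^(2*n) / ((2*n).factorial : ℝ) * (2*n)) (z * Real.sinh z) := by
  rw [← hasSum_nat_add_iff' 1]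
  simp only [Finset.sum_range_one, Nat.cast_zero, mul_zero, sub_zero]
  refine (congrArg (fun f => HasSum f _) (funext fun n => ?_)).mpr ((Real.hasSum_sinh z).mul_left z)
  rw [show 2*(n+1) = (2*n+1)+1 by ring, Nat.factorial_succ (2*n+1)]
  have h2 : (((2*n+1).factorial : ℕ) : ℝ) ≠ 0 := by positivity
  have h3 : (2*(n:ℝ)+1+1) ≠ 0 := by positivity
  push_cast
  field_simp
  ring

lemma I0_bounds (z : ℝ) (hz : 1 ≤ z) :
    1/4 * (Real.exp z / Real.sqrt z) ≤ I0 z ∧ I0 z ≤ 1/2 * (Real.exp z / Real.sqrt z) := by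
  have hz0 : 0 < z := by linarith
  have hw : 0 < Real.sqrt z := Real.sqrt_pos.2 hz0
  have hw2 : Real.sqrt z ^ 2 = z := Real.sq_sqrt hz0.le
  have hU := upper_hasSum z (Real.sqrt z) hz0
  have hI : I0 z = ∑' n : ℕ, z^(2*n) / ((2*n).factorial : ℝ) * bcoef n := by
    unfold I0; exact tsum_congr (term_eq z)
  have hle : ∀ n : ℕ, z^(2*n) / ((2*n).factorial : ℝ) * bcoef n ≤
      z^(2*n) / ((2*n).factorial : ℝ) * ((Real.sqrt z / (2*n+1) + 1 / Real.sqrt z) / 2) :=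
    fun n => mul_le_mul_of_nonneg_left (bcoef_le n _ hw) (by positivity)
  have hS : Summable fun n : ℕ => z^(2*n) / ((2*n).factorial : ℝ) * bcoef n :=
    Summable.of_nonneg_of_le (fun n => mul_nonneg (by positivity) (bcoef_pos n).le) hle hU.summable
  constructor
  · set r := Real.sqrt (2*z+1) with hr
    have hr0 : 0 < r := Real.sqrt_pos.2 (by linarith)
    have hr2 : r^2 = 2*z+1 := Real.sq_sqrt (by linarith)
    have hL := ((((Real.hasSum_cosh z).mul_left (3/2 - 1/(2*r^2))).sub
      ((lin_hasSum z).mul_left (1/r^2))).div_const r)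
    have h1 : ((3/2 - 1/(2*r^2)) * Real.cosh z - 1/r^2 * (z * Real.sinh z)) / r ≤ I0 z := by
      rw [hI]
      refine hasSum_le (fun n => ?_) hL hS.hasSum
      refine le_trans (le_of_eq ?_)
        (mul_le_mul_of_nonneg_left (le_bcoef n r hr0) (by positivity))
      field_simp
      ring
    refine le_trans ?_ h1
    have hsc : Real.sinh z ≤ Real.cosh z := (Real.sinh_lt_cosh z).le
    have hce : Real.exp z / 2 ≤ Real.cosh z := by
      rw [Real.cosh_eq]; linarith [Real.exp_pos (-z)]
    have hrw : r ≤ 2 * Real.sqrt z := by nlinarith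
    have h3 : Real.cosh z ≤ (3/2 - 1/(2*r^2)) * Real.cosh z - 1/r^2 * (z * Real.sinh z) := by
      have e : (3/2 - 1/(2*r^2)) * Real.cosh z - 1/r^2 * (z * Real.sinh z) - Real.cosh z
          = z * (Real.cosh z - Real.sinh z) / r^2 := by
        rw [hr2]; field_simp; ring
      have : 0 ≤ z * (Real.cosh z - Real.sinh z) / r^2 :=
        div_nonneg (mul_nonneg hz0.le (by linarith)) (by positivity)
      linarith
    calc 1/4 * (Real.exp z / Real.sqrt z) = (Real.exp z / 2) / (2 * Real.sqrt z) := by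
          field_simp; norm_num
      _ ≤ Real.cosh z / r := div_le_div₀ (Real.cosh_pos z).le hce hr0 hrw
      _ ≤ _ := div_le_div_of_nonneg_right h3 hr0.le
  · rw [hI]
    refine (hasSum_le hle hS.hasSum hU).trans (le_of_eq ?_)
    rw [← Real.cosh_add_sinh z]
    generalize Real.sqrt z = w at *
    subst hw2
    field_simp
    ring

theorem besselI0_asymptotics_and_kernel_bounds :
    (∃ c C : ℝ, 0 < c ∧ c ≤ C ∧ ∀ z : ℝ, 1 ≤ z →
      c * (Real.exp z / Real.sqrt z) ≤ I0 z ∧ I0 z ≤ C * (Real.exp z / Real.sqrt z)) ∧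
    (∃ c' C' : ℝ, 0 < c' ∧ c' ≤ C' ∧ ∀ t x y : ℝ, 0 < t → 0 < x → 0 < y → t ≤ x*y →
      c' * ((Real.sqrt (x*y*t))⁻¹ * Real.exp (-(x-y)^2/(2*t))) ≤ pk t x y ∧
      pk t x y ≤ C' * ((Real.sqrt (x*y*t))⁻¹ * Real.exp (-(x-y)^2/(2*t)))) := by
  refine ⟨⟨1/4, 1/2, by norm_num, by norm_num, I0_bounds⟩,
    ⟨1/4, 1/2, by norm_num, by norm_num, ?_⟩⟩
  intro t x y ht hx hy hxy
  have hz : 1 ≤ x*y/t := by rwa [le_div_iff₀ ht, one_mul]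
  obtain ⟨h1, h2⟩ := I0_bounds _ hz
  have hs : Real.sqrt (x*y*t) = t * Real.sqrt (x*y/t) := by
    rw [show x*y*t = t^2 * (x*y/t) by field_simp, Real.sqrt_mul (sq_nonneg t),
      Real.sqrt_sq ht.le]
  have he : Real.exp (-(x-y)^2/(2*t)) = Real.exp (-(x^2+y^2)/(2*t)) * Real.exp (x*y/t) := by
    rw [← Real.exp_add]; congr 1; field_simp; ring
  have key : ∀ c : ℝ, c * ((Real.sqrt (x*y*t))⁻¹ * Real.exp (-(x-y)^2/(2*t))) =
      t⁻¹ * Real.exp (-(x^2 + y^2)/(2*t)) *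
        (c * (Real.exp (x*y/t) / Real.sqrt (x*y/t))) := by
    intro c
    rw [hs, he, mul_inv]
    ring
  have hp : 0 ≤ t⁻¹ * Real.exp (-(x^2 + y^2)/(2*t)) := by positivity
  rw [key, key]
  exact ⟨mul_le_mul_of_nonneg_left h1 hp, mul_le_mul_of_nonneg_left h2 hp⟩
end

section
/- There exist constants 0 < c ≤ C such that for all x, y > 1 and t > 0, c·min(1, (x−1)(y−1)/t)·exp(−(x−y)²/(2t)) ≤ exp(−(x−y)²/(2t)) − exp(−(x+y−2)²/(2t)) ≤ C·min(1, (x−1)(y−1)/t)·exp(−(x−y)²/(2t)). Equivalently, the Dirichlet heat kernel of (1/2)·d²/dx² on the half-line (1,∞), namely g(t,x,y) = (2πt)^{−1/2}·(exp(−(x−y)²/(2t)) − exp(−(x+y−2)²/(2t))), satisfies g(t,x,y) ≍ min(1, (x−1)(y−1)/t)·t^{−1/2}·exp(−(x−y)²/(2t)) with absolute constants. -/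
open Real MeasureTheory

theorem halfline_gaussian_difference_estimate :
    ∃ c C : ℝ, 0 < c ∧ c ≤ C ∧ ∀ x y t : ℝ, 1 < x → 1 < y → 0 < t →
      c * (min 1 ((x-1)*(y-1)/t) * Real.exp (-(x-y)^2/(2*t))) ≤
        Real.exp (-(x-y)^2/(2*t)) - Real.exp (-(x+y-2)^2/(2*t)) ∧
      Real.exp (-(x-y)^2/(2*t)) - Real.exp (-(x+y-2)^2/(2*t)) ≤
        C * (min 1 ((x-1)*(y-1)/t) * Real.exp (-(x-y)^2/(2*t))) := by
  refine ⟨1/2, 2, by norm_num, by norm_num, ?_⟩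
  intro x y t hx hy ht
  have key : Real.exp (-(x+y-2)^2/(2*t)) =
      Real.exp (-(x-y)^2/(2*t)) * Real.exp (-(2*((x-1)*(y-1)/t))) := by
    rw [← Real.exp_add]
    congr 1
    field_simp
    ring
  have hu : 0 < (x-1)*(y-1)/t := div_pos (mul_pos (by linarith) (by linarith)) ht
  rw [key]
  generalize (x-1)*(y-1)/t = u at hu ⊢
  have hE : 0 < Real.exp (-(x-y)^2/(2*t)) := Real.exp_pos _
  generalize Real.exp (-(x-y)^2/(2*t)) = E at hE ⊢
  have h1 : 1 - 2*u ≤ Real.exp (-(2*u)) := by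
    have := Real.add_one_le_exp (-(2*u))
    linarith
  have h0 : 0 < Real.exp (-(2*u)) := Real.exp_pos _
  have h2 : Real.exp (-(2*u)) * (1 + 2*u) ≤ 1 := by
    have h3 := Real.add_one_le_exp (2*u)
    have h4 : Real.exp (-(2*u)) * Real.exp (2*u) = 1 := by
      rw [← Real.exp_add]; simp
    nlinarith
  generalize Real.exp (-(2*u)) = w at h0 h1 h2 ⊢
  have lo : 1/2 * min 1 u ≤ 1 - w := by
    rcases le_total u 1 with h | h
    · rw [min_eq_right h]; nlinarith
    · rw [min_eq_left h]; nlinarith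
  have hi : 1 - w ≤ 2 * min 1 u := by
    rcases le_total u 1 with h | h
    · rw [min_eq_right h]; linarith
    · rw [min_eq_left h]; linarith
  constructor
  · nlinarith [mul_le_mul_of_nonneg_right lo hE.le]
  · nlinarith [mul_le_mul_of_nonneg_right hi hE.le]
end

section
/- For all a, b, t > 0 one has ∫₀ᵗ (t−s)^{−1/2}·s^{−3/2}·exp(−a²/(2s))·exp(−b²/(2(t−s))) ds = (√(2π)/a)·t^{−1/2}·exp(−(a+b)²/(2t)). -/
open Real MeasureTheory

lemma aux_J (a c : ℝ) (ha : 0 < a) (hc : 0 < c) :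
    ∫ x in Set.Ioi (0:ℝ), Real.exp (-(a*x - c/x)^2/2) = Real.sqrt (2*Real.pi) / (2*a) := by
  set E : ℝ → ℝ := fun x => Real.exp (-(a*x - c/x)^2/2) with hE
  have hder : ∀ x ∈ Set.Ioi (0:ℝ), HasDerivWithinAt (fun x => a*x - c/x) (a + c/x^2)
      (Set.Ioi 0) x := by
    intro x hx
    have hx0 : x ≠ 0 := ne_of_gt hx
    have h := ((hasDerivAt_id x).const_mul a).sub ((hasDerivAt_inv hx0).const_mul c)
    refine HasDerivAt.hasDerivWithinAt ?_
    have h' : HasDerivAt (fun x => a*x - c/x) (a * 1 - c * -(x ^ 2)⁻¹) x := h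
    refine h'.congr_deriv ?_
    ring
  have hinj : Set.InjOn (fun x => a*x - c/x) (Set.Ioi (0:ℝ)) := by
    refine StrictMonoOn.injOn ?_
    intro x hx y hy hxy
    have h1 : c / y < c / x := div_lt_div_of_pos_left hc hx hxy
    have h2 : a * x < a * y := mul_lt_mul_of_pos_left hxy ha
    simp only
    linarith
  have himg : (fun x => a*x - c/x) '' (Set.Ioi (0:ℝ)) = Set.univ := by
    refine Set.eq_univ_of_forall fun u => ?_
    have hac : 0 < a * c := mul_pos ha hc
    have hs : Real.sqrt (u^2+4*(a*c)) ^ 2 = u^2+4*(a*c) := Real.sq_sqrt (by positivity)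
    have hpos : 0 < u + Real.sqrt (u^2+4*(a*c)) := by
      have : |u| < Real.sqrt (u^2+4*(a*c)) := by
        rw [← Real.sqrt_sq_eq_abs]
        exact Real.sqrt_lt_sqrt (sq_nonneg _) (by linarith)
      linarith [neg_abs_le u]
    refine ⟨(u + Real.sqrt (u^2+4*(a*c)))/(2*a), Set.mem_Ioi.2 (by positivity), ?_⟩
    simp only
    generalize Real.sqrt (u^2+4*(a*c)) = r at *
    have := hpos.ne'
    field_simp
    nlinarith
  have hgi : Integrable (fun u : ℝ => Real.exp (-u^2/2)) := by
    have := integrable_exp_neg_mul_sq (b := 1/2) (by norm_num)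
    refine this.congr (Filter.Eventually.of_forall fun x => ?_)
    simp only
    congr 1
    ring
  have hgv : ∫ u : ℝ, Real.exp (-u^2/2) = Real.sqrt (2*Real.pi) := by
    have := integral_gaussian (1/2)
    rw [show Real.pi / (1/2) = 2*Real.pi by ring] at this
    rw [← this]
    congr 1
    ext x
    congr 1
    ring
  have hti := (integrableOn_image_iff_integrableOn_abs_deriv_smul measurableSet_Ioi hder hinj
    (fun u : ℝ => Real.exp (-u^2/2)))
  have htv := (integral_image_eq_integral_abs_deriv_smul measurableSet_Ioi hder hinj
    (fun u : ℝ => Real.exp (-u^2/2)))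
  rw [himg] at hti htv
  rw [integrableOn_univ] at hti
  rw [Measure.restrict_univ, hgv] at htv
  have hti' : IntegrableOn (fun x => (a + c/x^2) * E x) (Set.Ioi 0) := by
    refine (hti.1 hgi).congr_fun (fun x hx => ?_) measurableSet_Ioi
    have : 0 ≤ a + c/x^2 := by positivity
    simp only [abs_of_nonneg this, smul_eq_mul, hE]
  have htv' : Real.sqrt (2*Real.pi) = ∫ x in Set.Ioi (0:ℝ), (a + c/x^2) * E x := by
    rw [htv]
    refine setIntegral_congr_fun measurableSet_Ioi (fun x hx => ?_)
    have : 0 ≤ a + c/x^2 := by positivity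
    simp only [abs_of_nonneg this, smul_eq_mul, hE]
  have hEi : IntegrableOn (fun x => a * E x) (Set.Ioi 0) := by
    refine Integrable.mono' hti' ?_ (Filter.Eventually.of_forall fun x => ?_)
    · apply Measurable.aestronglyMeasurable
      simp only [hE]
      fun_prop
    · have h1 : 0 < E x := Real.exp_pos _
      rw [Real.norm_of_nonneg (by positivity)]
      have : 0 ≤ c/x^2 := by positivity
      nlinarith
  have hE2 : IntegrableOn (fun x => c/x^2 * E x) (Set.Ioi 0) := by
    refine (hti'.sub hEi).congr (Filter.Eventually.of_forall fun x => ?_)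
    simp only [Pi.sub_apply]
    ring
  have hsplit : Real.sqrt (2*Real.pi) = (∫ x in Set.Ioi (0:ℝ), a * E x)
      + ∫ x in Set.Ioi (0:ℝ), c/x^2 * E x := by
    rw [htv', ← integral_add hEi hE2]
    congr 1
    ext x
    ring
  -- inversion
  have hder2 : ∀ x ∈ Set.Ioi (0:ℝ), HasDerivWithinAt (fun x => (c/a)*x⁻¹) (-((c/a)/x^2))
      (Set.Ioi 0) x := by
    intro x hx
    have hx0 : x ≠ 0 := ne_of_gt hx
    refine HasDerivAt.hasDerivWithinAt ?_
    refine ((hasDerivAt_inv hx0).const_mul (c/a)).congr_deriv ?_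
    ring
  have hca : 0 < c / a := by positivity
  have hinj2 : Set.InjOn (fun x => (c/a)*x⁻¹) (Set.Ioi (0:ℝ)) := by
    intro x hx y hy hxy
    simpa [hca.ne', ha.ne', hc.ne'] using hxy
  have himg2 : (fun x => (c/a)*x⁻¹) '' (Set.Ioi (0:ℝ)) = Set.Ioi 0 := by
    ext y
    constructor
    · rintro ⟨x, hx, rfl⟩
      have : 0 < x := hx
      exact Set.mem_Ioi.2 (by positivity)
    · intro hy
      have : 0 < y := hy
      refine ⟨(c/a)*y⁻¹, Set.mem_Ioi.2 (by positivity), ?_⟩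
      simp only
      field_simp
  have hv2 := integral_image_eq_integral_abs_deriv_smul measurableSet_Ioi hder2 hinj2
    (fun x => a * E x)
  rw [himg2] at hv2
  have hv3 : (∫ x in Set.Ioi (0:ℝ), a * E x) = ∫ x in Set.Ioi (0:ℝ), c/x^2 * E x := by
    rw [hv2]
    refine setIntegral_congr_fun measurableSet_Ioi (fun x hx => ?_)
    have hx0 : 0 < x := hx
    have h1 : 0 ≤ (c/a)/x^2 := by positivity
    have h2 : E ((c/a)*x⁻¹) = E x := by
      simp only [hE]
      congr 1
      field_simp
      ring
    simp only [abs_neg, abs_of_nonneg h1, smul_eq_mul, h2]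
    field_simp
  rw [← hv3, integral_const_mul] at hsplit
  rw [hsplit]
  field_simp
  ring

theorem convolution_integral_identity :
    ∀ a b t : ℝ, 0 < a → 0 < b → 0 < t →
      (∫ s in Set.Ioo (0:ℝ) t, (t-s)^(-(1:ℝ)/2) * s^(-(3:ℝ)/2) *
        Real.exp (-a^2/(2*s)) * Real.exp (-b^2/(2*(t-s))))
      = (Real.sqrt (2*Real.pi) / a) * t^(-(1:ℝ)/2) * Real.exp (-(a+b)^2/(2*t)) := by
  intro a b t ha hb ht
  have hder : ∀ x ∈ Set.Ioi (0:ℝ), HasDerivWithinAt (fun x => t/(1+t*x^2))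
      (-(2*t^2*x/(1+t*x^2)^2)) (Set.Ioi 0) x := by
    intro x hx
    have h0 : 1+t*x^2 ≠ 0 := by positivity
    refine HasDerivAt.hasDerivWithinAt ?_
    have h1 : HasDerivAt (fun x : ℝ => 1+t*x^2) (t*(2*x)) x := by
      simpa using ((hasDerivAt_pow 2 x).const_mul t).const_add 1
    refine ((hasDerivAt_const x t).div h1 h0).congr_deriv ?_
    field_simp
    ring
  have hinj : Set.InjOn (fun x => t/(1+t*x^2)) (Set.Ioi (0:ℝ)) := by
    refine StrictAntiOn.injOn ?_
    intro x hx y hy hxy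
    have hx0 : 0 < x := hx
    have : x^2 < y^2 := by gcongr
    simp only
    gcongr
  have himg : (fun x => t/(1+t*x^2)) '' (Set.Ioi (0:ℝ)) = Set.Ioo 0 t := by
    ext s
    constructor
    · rintro ⟨x, hx, rfl⟩
      have hx0 : 0 < x := hx
      refine ⟨by positivity, ?_⟩
      simp only
      apply div_lt_self ht
      have : 0 < t*x^2 := by positivity
      linarith
    · rintro ⟨h0, h1⟩
      have h2 : 0 < (t-s)/(s*t) := div_pos (by linarith) (by positivity)
      refine ⟨Real.sqrt ((t-s)/(s*t)), Set.mem_Ioi.2 (Real.sqrt_pos.2 h2), ?_⟩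
      simp only
      rw [Real.sq_sqrt h2.le]
      field_simp
      ring
  have hv := integral_image_eq_integral_abs_deriv_smul measurableSet_Ioi hder hinj
    (fun s => (t-s)^(-(1:ℝ)/2) * s^(-(3:ℝ)/2) *
        Real.exp (-a^2/(2*s)) * Real.exp (-b^2/(2*(t-s))))
  rw [himg] at hv
  rw [hv]
  have key : ∀ x ∈ Set.Ioi (0:ℝ), |(-(2*t^2*x/(1+t*x^2)^2))| • ((t-t/(1+t*x^2))^(-(1:ℝ)/2) *
      (t/(1+t*x^2))^(-(3:ℝ)/2) *
        Real.exp (-a^2/(2*(t/(1+t*x^2)))) * Real.exp (-b^2/(2*(t-t/(1+t*x^2)))))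
      = (2 * t^(-(1:ℝ)/2) * Real.exp (-(a+b)^2/(2*t))) *
        Real.exp (-(a*x - (b/t)/x)^2/2) := by
    intro x hx
    have hx0 : 0 < x := hx
    obtain ⟨D, hD⟩ : ∃ D, D = 1+t*x^2 := ⟨_, rfl⟩
    have hD0 : 0 < D := by rw [hD]; positivity
    have hts : t - t/(1+t*x^2) = (t*x)^2/D := by
      rw [← hD]; field_simp; rw [hD]; ring
    have hexp : Real.exp (-a^2/(2*(t/(1+t*x^2)))) * Real.exp (-b^2/(2*(t-t/(1+t*x^2))))
        = Real.exp (-(a+b)^2/(2*t)) * Real.exp (-(a*x - (b/t)/x)^2/2) := by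
      rw [← Real.exp_add, ← Real.exp_add, hts, hD]
      congr 1
      field_simp
      ring
    have half : ∀ y : ℝ, 0 < y → y^(-(1:ℝ)/2) = (Real.sqrt y)⁻¹ := by
      intro y hy
      rw [neg_div, Real.rpow_neg hy.le, Real.sqrt_eq_rpow]
    have thalf : ∀ y : ℝ, 0 < y → y^(-(3:ℝ)/2) = y⁻¹ * (Real.sqrt y)⁻¹ := by
      intro y hy
      rw [← half y hy, ← Real.rpow_neg_one y, ← Real.rpow_add hy]
      norm_num
    have hpos : 0 ≤ 2*t^2*x/D^2 := by positivity
    have hcoef : 2*t^2*x/D^2 * (((t*x)^2/D)^(-(1:ℝ)/2) * (t/D)^(-(3:ℝ)/2))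
        = 2 * t^(-(1:ℝ)/2) := by
      rw [half _ (by positivity), half _ ht, thalf _ (by positivity),
        Real.sqrt_div (by positivity), Real.sqrt_div ht.le, Real.sqrt_sq (by positivity)]
      have h3 : Real.sqrt D ^ 2 = D := Real.sq_sqrt hD0.le
      have h4 : 0 < Real.sqrt D := Real.sqrt_pos.2 hD0
      have h5 : 0 < Real.sqrt t := Real.sqrt_pos.2 ht
      field_simp
      rw [h3]
    rw [mul_assoc (_ * _) (Real.exp _) (Real.exp _), hexp, hts, ← hD, abs_neg,
      abs_of_nonneg hpos, smul_eq_mul, ← mul_assoc, hcoef]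
    ring
  rw [setIntegral_congr_fun measurableSet_Ioi key, integral_const_mul,
    aux_J a (b/t) ha (by positivity)]
  field_simp
end
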